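/- arXiv:1405.1000 — 3 statements merged into one kernel-verified Lean document; each statement's English description precedes it below -/
import Mathlib

section
/- Let f ∈ Homeo₀(𝔸) with a lift f̃ whose rotation set is the singleton {p/q}, where p, q are integers with either (q > 0, 0 < p < q, and p, q coprime) or (p = 0 and q = 1). Then for all integers n > 0 and N > 0 there exists a family (γ'_i)_{i ∈ ℤ/nqℤ} of pairwise disjoint simple curves joining the two boundary components of 𝔸 such that for every index i and every integer 0 ≤ k ≤ N: (1) if n ≠ 1 or q ≠ 1, the curve f^k(γ'_i) lies strictly between the curves γ'_{i+knp−1} and γ'_{i+knp+1}; (2) if n = q = 1, any lift of the curve f^k(γ'_1) to the strip ℝ × [0,1] meets at most one lift of the curve γ'_1. -/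
open Filter Topology Set

/-- `f` is isotopic to the identity through homeomorphisms. -/
def IsotopicToId {X : Type*} [TopologicalSpace X] (f : X ≃ₜ X) : Prop :=
  ∃ F : unitInterval → X ≃ₜ X,
    Continuous (fun p : unitInterval × X => F p.1 p.2) ∧
    F 0 = Homeomorph.refl X ∧ F 1 = f

/-- The closed annulus `𝔸 = (ℝ/ℤ) × [0,1]`. -/
noncomputable abbrev Annulus : Type := AddCircle (1 : ℝ) × unitInterval

/-- The strip `ℝ × [0,1]`, universal cover of the annulus. -/
abbrev Strip : Type := ℝ × unitInterval

/-- The covering map `π : ℝ × [0,1] → 𝔸`. -/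
noncomputable def pA : Strip → Annulus := fun x => ((x.1 : AddCircle (1 : ℝ)), x.2)

/-- `ft` is a lift of `f` to the strip. -/
def IsLiftA (f : Annulus ≃ₜ Annulus) (ft : Strip ≃ₜ Strip) : Prop :=
  pA ∘ ft = f ∘ pA

/-- The rotation set of a homeomorphism `ft` of the strip: the set of limits of sequences
`(p₁(ftⁿᵏ(x̃ₖ)) − p₁(x̃ₖ))/nₖ` with `nₖ → +∞`. -/
def rotSet (ft : Strip ≃ₜ Strip) : Set ℝ :=
  {r | ∃ (nk : ℕ → ℕ) (xk : ℕ → Strip), Tendsto nk atTop atTop ∧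
    Tendsto (fun k => (((⇑ft)^[nk k] (xk k)).1 - (xk k).1) / nk k) atTop (nhds r)}

/-- A simple curve in the annulus joining the two boundary components. -/
def JoinsBoundaryA (γ : unitInterval → Annulus) : Prop :=
  Continuous γ ∧ Function.Injective γ ∧
    ((γ 0).2 : ℝ) = 0 ∧ ((γ 1).2 : ℝ) = 1 ∧
    ∀ t : unitInterval, t ≠ 0 → t ≠ 1 → ((γ t).2 : ℝ) ∈ Set.Ioo (0 : ℝ) 1

/-- A simple curve in the strip joining the two boundary components. -/
def JoinsBoundaryS (γ : unitInterval → Strip) : Prop :=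
  Continuous γ ∧ Function.Injective γ ∧
    ((γ 0).2 : ℝ) = 0 ∧ ((γ 1).2 : ℝ) = 1 ∧
    ∀ t : unitInterval, t ≠ 0 → t ≠ 1 → ((γ t).2 : ℝ) ∈ Set.Ioo (0 : ℝ) 1

/-- `γt` is a (continuous) lift to the strip of the curve `γ` in the annulus. -/
def IsCurveLift (γ : unitInterval → Annulus) (γt : unitInterval → Strip) : Prop :=
  Continuous γt ∧ pA ∘ γt = γ

/-- The point `x` lies strictly on the right of the curve `γt` of the strip: it belongs
to the connected component of the complement of `γt` containing all the far-right points
(for a curve oriented from the bottom boundary to the top boundary of the strip, the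
right-hand side is towards `x₁ = +∞`). -/
def OnRightS (γt : unitInterval → Strip) (x : Strip) : Prop :=
  ∃ q : Strip, (∀ t, (γt t).1 < q.1) ∧ x ∈ connectedComponentIn (Set.range γt)ᶜ q

/-- The point `x` lies strictly on the left of the curve `γt` of the strip. -/
def OnLeftS (γt : unitInterval → Strip) (x : Strip) : Prop :=
  ∃ q : Strip, (∀ t, q.1 < (γt t).1) ∧ x ∈ connectedComponentIn (Set.range γt)ᶜ q

/-- The set `A` lies strictly on the right of the curve `γt` of the strip. -/
def StrictlyRightS (γt : unitInterval → Strip) (A : Set Strip) : Prop :=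
  ∀ x ∈ A, OnRightS γt x

/-- The set `A` lies strictly on the left of the curve `γt` of the strip. -/
def StrictlyLeftS (γt : unitInterval → Strip) (A : Set Strip) : Prop :=
  ∀ x ∈ A, OnLeftS γt x

/-- The curve `γ₂` lies strictly between the curves `γ₁` and `γ₃` (three pairwise
disjoint simple curves joining the two boundary components of the annulus): there are
lifts `γt₁`, `γt₂` of `γ₁`, `γ₂` such that `γt₂` lies strictly on the right of `γt₁`
and, for every lift `γt₃` of `γ₃` lying strictly on the right of `γt₁`, the curve `γt₂`
lies strictly on the left of `γt₃`. -/
def StrictlyBetween (γ₁ γ₂ γ₃ : unitInterval → Annulus) : Prop :=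
  ∃ γt₁ γt₂ : unitInterval → Strip, IsCurveLift γ₁ γt₁ ∧ IsCurveLift γ₂ γt₂ ∧
    StrictlyRightS γt₁ (Set.range γt₂) ∧
    ∀ γt₃ : unitInterval → Strip, IsCurveLift γ₃ γt₃ →
      StrictlyRightS γt₁ (Set.range γt₃) → StrictlyLeftS γt₃ (Set.range γt₂)


namespace VC

instance vc_lpc : LocallyPathConnectedSpace unitInterval :=
  (convex_Icc (0:ℝ) 1).locallyPathConnectedSpace
instance vc_contr : ContractibleSpace unitInterval :=
  Convex.contractibleSpace (convex_Icc (0:ℝ) 1) ⟨0, by simp⟩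

lemma int_const {X : Type*} [TopologicalSpace X] {S : Set X} (hS : IsPreconnected S)
    {g : X → ℝ} (hg : ContinuousOn g S) (h : ∀ x ∈ S, ∃ n : ℤ, g x = n) {x y : X}
    (hx : x ∈ S) (hy : y ∈ S) : g x = g y := by
  refine hS.constant_of_mapsTo (T := range (Int.cast : ℤ → ℝ)) ?_ hg ?_ hx hy
  · exact Int.isClosedEmbedding_coe_real.isEmbedding.isDiscrete_range
  · intro z hz
    obtain ⟨n, hn⟩ := h z hz
    exact ⟨n, hn.symm⟩

lemma coe_int {x y : ℝ} (h : (x : AddCircle (1:ℝ)) = y) : ∃ n : ℤ, x - y = n := by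
  have : ((x - y : ℝ) : AddCircle (1:ℝ)) = 0 := by
    rw [AddCircle.coe_sub, h, sub_self]
  obtain ⟨n, hn⟩ := (AddCircle.coe_eq_zero_iff _).1 this
  exact ⟨n, by rw [← hn]; simp⟩

/-- unicoherence of simply connected spaces, open version -/
lemma unicoh {X : Type*} [TopologicalSpace X] [SimplyConnectedSpace X]
    [LocallyPathConnectedSpace X] [NormalSpace X] {U V : Set X} (hU : IsOpen U) (hV : IsOpen V)
    (cU : IsPreconnected U) (cV : IsPreconnected V) (huv : U ∪ V = univ) :
    IsPreconnected (U ∩ V) := by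
  classical
  intro A B hA hB hAB ⟨a, haUV, haA⟩ ⟨b, hbUV, hbB⟩
  by_contra hne
  have hdis : ∀ x ∈ U ∩ V, x ∈ A → x ∈ B → False := fun x h1 h2 h3 => hne ⟨x, h1, h2, h3⟩
  obtain ⟨h, h0, h1, -⟩ := exists_continuous_zero_one_of_isClosed (s := Vᶜ) (t := Uᶜ)
    hV.isClosed_compl hU.isClosed_compl (by
      rw [Set.disjoint_left]
      intro x hx hx'
      have : x ∈ U ∪ V := huv ▸ mem_univ x
      rcases this with h | h
      · exact hx' h
      · exact hx h)
  set O : Set X := U ∩ V ∩ A with hO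
  have hOo : IsOpen O := (hU.inter hV).inter hA
  -- frontier of O
  have hfr : ∀ x ∈ closure O, x ∉ O → x ∉ U ∩ V := by
    intro x hx hxO hxUV
    have hxB : x ∈ B := by
      rcases hAB hxUV with h | h
      · exact absurd ⟨hxUV, h⟩ hxO
      · exact h
    obtain ⟨y, hy1, hy3⟩ := mem_closure_iff.1 hx _ hB hxB
    exact hdis y hy3.1 hy3.2 hy1
  let φ : X → AddCircle (1:ℝ) := fun x => if x ∈ O then ((h x : ℝ) : AddCircle (1:ℝ)) else 0
  have hφ : Continuous φ := by
    refine continuous_if ?_ ?_ continuousOn_const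
    · intro x hx
      have hxO : x ∉ O := by
        have := hx.2
        rwa [show {a | a ∈ O} = O from rfl, hOo.interior_eq] at this
      have := hfr x hx.1 hxO
      by_cases hxU : x ∈ U
      · have hxV : x ∈ Vᶜ := fun hxV => this ⟨hxU, hxV⟩
        rw [h0 hxV]; simp
      · rw [h1 hxU]; simp
    · exact ((AddCircle.continuous_mk' (1:ℝ)).comp h.continuous).continuousOn
  obtain ⟨F, ⟨-, hF⟩, -⟩ := (AddCircle.isCoveringMap_coe (1:ℝ)).existsUnique_continuousMap_lifts
    (⟨φ, hφ⟩ : C(X, AddCircle (1:ℝ))) b 0 (by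
      show ((0:ℝ) : AddCircle (1:ℝ)) = φ b
      have : b ∉ O := fun hb => hdis b hbUV hb.2 hbB
      simp [φ, this])
  have hF' : ∀ x, ((F x : ℝ) : AddCircle (1:ℝ)) = φ x := fun x => congr_fun hF x
  have haO : a ∈ O := ⟨haUV, haA⟩
  have hbO : b ∉ O := fun hb => hdis b hbUV hb.2 hbB
  -- on U
  have e1 : F a - h a = F b := by
    have := int_const cU (g := fun x => F x - if x ∈ O then h x else 0) ?_ ?_ haUV.1 hbUV.1
    · simpa [haO, hbO] using this
    · refine F.continuous.continuousOn.sub ?_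
      refine ContinuousOn.if ?_ (h.continuous.continuousOn) continuousOn_const
      intro x hx
      have hxO : x ∉ O := by
        have := hx.2.2
        rwa [show {a | a ∈ O} = O from rfl, hOo.interior_eq] at this
      exact h0 (fun hxV => hfr x hx.2.1 hxO ⟨hx.1, hxV⟩)
    · intro x hx
      by_cases hxO : x ∈ O
      · simp only [hxO, if_true]
        apply coe_int
        rw [hF']; simp [φ, hxO]
      · simp only [hxO, if_false]
        apply coe_int
        rw [hF']; simp [φ, hxO]
  have e2 : F a - h a = F b - 1 := by
    have := int_const cV (g := fun x => F x - if x ∈ O then h x else 1) ?_ ?_ haUV.2 hbUV.2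
    · simpa [haO, hbO] using this
    · refine F.continuous.continuousOn.sub ?_
      refine ContinuousOn.if ?_ (h.continuous.continuousOn) continuousOn_const
      intro x hx
      have hxO : x ∉ O := by
        have := hx.2.2
        rwa [show {a | a ∈ O} = O from rfl, hOo.interior_eq] at this
      exact h1 (fun hxV => hfr x hx.2.1 hxO ⟨hxV, hx.1⟩)
    · intro x hx
      by_cases hxO : x ∈ O
      · simp only [hxO, if_true]
        apply coe_int
        rw [hF']; simp [φ, hxO]
      · simp only [hxO, if_false]
        apply coe_int
        rw [hF', show ((1:ℝ) : AddCircle (1:ℝ)) = 0 from AddCircle.coe_period 1]; simp [φ, hxO]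
  linarith

lemma up_lem {g : unitInterval → ℝ} (hg : Continuous g) {b : ℝ} (h0 : g 0 ≤ b)
    (h : ∀ t, g t ∉ Ioo b (b + Real.pi)) : g 1 ≤ b := by
  by_contra hc
  push Not at hc
  have hpi := Real.pi_pos
  obtain ⟨t, ht⟩ := intermediate_value_univ (0 : unitInterval) 1 hg
    (show min (g 1) (b + Real.pi / 2) ∈ Icc (g 0) (g 1) from
      ⟨le_min (by linarith) (by linarith), min_le_left _ _⟩)
  refine h t ?_
  rw [ht]
  exact ⟨lt_min hc (by linarith), (min_le_right _ _).trans_lt (by linarith)⟩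

lemma down_lem {g : unitInterval → ℝ} (hg : Continuous g) {b : ℝ} (h0 : b ≤ g 0)
    (h : ∀ t, g t ∉ Ioo (b - Real.pi) b) : b ≤ g 1 := by
  have := up_lem (g := fun t => - g t) hg.neg (b := -b) (by simpa using h0) (fun t ht => h t
    ⟨by linarith [ht.2], by linarith [ht.1]⟩)
  linarith

/-- crossing paths -/
lemma crossing {β γ : unitInterval → Strip} (hβ : Continuous β) (hγ : Continuous γ)
    (h0 : ((γ 0).2 : ℝ) = 0) (h1 : ((γ 1).2 : ℝ) = 1) (hl : ∀ t, (β 0).1 < (γ t).1)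
    (hr : ∀ t, (γ t).1 < (β 1).1) : ∃ s t, β s = γ t := by
  by_contra hne
  push Not at hne
  let F : unitInterval × unitInterval → ℂ := fun z =>
    ⟨(β z.1).1 - (γ z.2).1, ((β z.1).2 : ℝ) - ((γ z.2).2 : ℝ)⟩
  have hF : Continuous F := by
    have : F = fun z => (((β z.1).1 - (γ z.2).1 : ℝ) : ℂ)
      + (((β z.1).2 : ℝ) - ((γ z.2).2 : ℝ) : ℝ) * Complex.I := by
      ext z; apply Complex.ext <;> simp [F]
    rw [this]
    fun_prop
  have hF0 : ∀ z, F z ∈ ({0}ᶜ : Set ℂ) := by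
    intro z hz
    have e1 := congrArg Complex.re hz
    have e2 := congrArg Complex.im hz
    simp only [F, Complex.zero_re, Complex.zero_im] at e1 e2
    exact hne z.1 z.2 (Prod.ext (by linarith) (Subtype.ext (by linarith)))
  obtain ⟨G, ⟨hG0, hG⟩, -⟩ := Complex.isCoveringMapOn_exp.existsUnique_continuousMap_lifts
    (⟨F, hF⟩ : C(unitInterval × unitInterval, ℂ)) (a₀ := (0, 0)) (e₀ := Complex.log (F (0, 0)))
    (Complex.exp_log (hF0 _)) hF0
  have hG' : ∀ z, Complex.exp (G z) = F z := fun z => congr_fun hG z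
  let θ : unitInterval × unitInterval → ℝ := fun z => (G z).im
  have hθ : Continuous θ := Complex.continuous_im.comp G.continuous
  have hre : ∀ z, (β z.1).1 - (γ z.2).1 = Real.exp (G z).re * Real.cos (θ z) := fun z => by
    have := congrArg Complex.re (hG' z)
    rw [Complex.exp_re] at this; exact this.symm
  have him : ∀ z, ((β z.1).2 : ℝ) - ((γ z.2).2 : ℝ) = Real.exp (G z).re * Real.sin (θ z) :=
    fun z => by
    have := congrArg Complex.im (hG' z)
    rw [Complex.exp_im] at this; exact this.symm
  have hpi := Real.pi_pos
  have cL : ∀ t, Real.cos (θ (0, t)) < 0 := fun t => by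
    have := hre (0, t)
    have h2 := hl t
    by_contra hc
    have := mul_nonneg (Real.exp_pos (G (0,t)).re).le (not_lt.1 hc)
    simp only at *
    linarith
  have cR : ∀ t, 0 < Real.cos (θ (1, t)) := fun t => by
    have := hre (1, t)
    have h2 := hr t
    by_contra hc
    have := mul_nonpos_of_nonneg_of_nonpos (Real.exp_pos (G (1,t)).re).le (not_lt.1 hc)
    simp only at *
    linarith
  have sB : ∀ s, 0 ≤ Real.sin (θ (s, 0)) := fun s => by
    have := him (s, 0)
    have h2 := (β s).2.2.1
    by_contra hc
    have := mul_neg_of_pos_of_neg (Real.exp_pos (G (s,0)).re) (not_le.1 hc)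
    simp only at *
    linarith
  have sT : ∀ s, Real.sin (θ (s, 1)) ≤ 0 := fun s => by
    have := him (s, 1)
    have h2 := (β s).2.2.2
    by_contra hc
    have := mul_pos (Real.exp_pos (G (s,1)).re) (not_le.1 hc)
    simp only at *
    linarith
  have k0 : θ (0,0) ∈ Ioc (-Real.pi) Real.pi := by
    have : θ (0,0) = (F (0,0)).arg := by
      simp only [θ, hG0, Complex.log_im]
    rw [this]; exact Complex.arg_mem_Ioc _
  have k1 : Real.pi / 2 ≤ θ (0,0) := by
    by_contra hc
    push Not at hc
    rcases lt_or_ge (θ (0,0)) 0 with h | h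
    · exact absurd (sB 0) (not_le.2 (Real.sin_neg_of_neg_of_neg_pi_lt h k0.1))
    · exact absurd (cL 0) (not_lt.2 (Real.cos_nonneg_of_mem_Icc ⟨by linarith, hc.le⟩))
  have a1 : θ (1,0) ≤ Real.pi := by
    refine up_lem (g := fun s => θ (s, 0)) (by fun_prop) k0.2 ?_
    intro s hs
    have : 0 < Real.sin (θ (s,0) - Real.pi) :=
      Real.sin_pos_of_pos_of_lt_pi (by linarith [hs.1]) (by linarith [hs.2])
    rw [Real.sin_sub_pi] at this
    linarith [sB s]
  have a2 : θ (1,0) ≤ Real.pi / 2 := by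
    by_contra hc
    push Not at hc
    exact absurd (cR 0) (not_lt.2 (Real.cos_nonpos_of_pi_div_two_le_of_le hc.le (by linarith)))
  have a3 : θ (1,1) ≤ Real.pi / 2 := by
    refine up_lem (g := fun s => θ (1, s)) (by fun_prop) a2 ?_
    intro s hs
    exact absurd (cR s) (not_lt.2
      (Real.cos_nonpos_of_pi_div_two_le_of_le hs.1.le (by linarith [hs.2])))
  have b1 : Real.pi / 2 ≤ θ (0,1) := by
    refine down_lem (g := fun s => θ (0, s)) (by fun_prop) k1 ?_
    intro s hs
    exact absurd (cL s) (not_lt.2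
      (Real.cos_nonneg_of_mem_Icc ⟨by linarith [hs.1], hs.2.le⟩))
  have b2 : Real.pi ≤ θ (0,1) := by
    by_contra hc
    push Not at hc
    exact absurd (sT 0) (not_le.2 (Real.sin_pos_of_pos_of_lt_pi (by linarith) hc))
  have b3 : Real.pi ≤ θ (1,1) := by
    refine down_lem (g := fun s => θ (s, 1)) (by fun_prop) b2 ?_
    intro s hs
    exact absurd (sT s) (not_le.2
      (Real.sin_pos_of_pos_of_lt_pi (by linarith [hs.1]) hs.2))
  linarith

def ArcIn {X : Type*} [TopologicalSpace X] (O : Set X) (x y : X) : Prop :=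
  ∃ (b : ℝ) (g : ℝ → X), 0 ≤ b ∧ ContinuousOn g (Icc 0 b) ∧ InjOn g (Icc 0 b) ∧
    MapsTo g (Icc 0 b) O ∧ g 0 = x ∧ g b = y

lemma ArcIn.trans {X : Type*} [TopologicalSpace X] [T2Space X] {O : Set X} {x y z : X}
    (h1 : ArcIn O x y) (h2 : ArcIn O y z) : ArcIn O x z := by
  obtain ⟨b₁, g₁, hb₁, c₁, i₁, m₁, s₁, e₁⟩ := h1
  obtain ⟨b₂, g₂, hb₂, c₂, i₂, m₂, s₂, e₂⟩ := h2
  have hK : IsClosed (g₁ '' Icc 0 b₁) := (isCompact_Icc.image_of_continuousOn c₁).isClosed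
  have hS : IsClosed (Icc 0 b₂ ∩ g₂ ⁻¹' (g₁ '' Icc 0 b₁)) :=
    c₂.preimage_isClosed_of_isClosed isClosed_Icc hK
  have hSc : IsCompact (Icc 0 b₂ ∩ g₂ ⁻¹' (g₁ '' Icc 0 b₁)) :=
    isCompact_Icc.of_isClosed_subset hS inter_subset_left
  obtain ⟨t₀, ⟨ht₀, s, hs, hst⟩, hmax⟩ := hSc.exists_isGreatest
    ⟨0, ⟨le_refl _, hb₂⟩, b₁, ⟨hb₁, le_refl _⟩, by rw [e₁, s₂]⟩
  have hlate : ∀ t, t₀ < t → t ≤ b₂ → ∀ r ∈ Icc 0 b₁, g₁ r ≠ g₂ t := by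
    intro t ht htb r hr hrt
    have := hmax (show t ∈ Icc 0 b₂ ∩ g₂ ⁻¹' (g₁ '' Icc 0 b₁) from
      ⟨⟨ht₀.1.trans ht.le, htb⟩, r, hr, hrt⟩)
    linarith
  let g : ℝ → X := fun t => if t ≤ s then g₁ t else g₂ (t - s + t₀)
  have gl : ∀ t, t ≤ s → g t = g₁ t := fun t ht => if_pos ht
  have gr : ∀ t, s ≤ t → g t = g₂ (t - s + t₀) := by
    intro t ht
    rcases ht.eq_or_lt with h | h
    · subst h
      simp [g, hst]
    · exact if_neg (not_le.2 h)
  refine ⟨s + (b₂ - t₀), g, by linarith [hs.1, ht₀.2], ?_, ?_, ?_, ?_, ?_⟩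
  · rw [← Icc_union_Icc_eq_Icc (b := s) hs.1 (by linarith [ht₀.2])]
    refine ContinuousOn.union_of_isClosed ?_ ?_ isClosed_Icc isClosed_Icc
    · exact (c₁.mono (Icc_subset_Icc_right hs.2)).congr (fun t ht => gl t ht.2)
    · refine ContinuousOn.congr (f := fun t => g₂ (t - s + t₀)) ?_ (fun t ht => gr t ht.1)
      refine c₂.comp (by fun_prop) ?_
      intro t ht
      exact ⟨by linarith [ht.1, ht₀.1], by linarith [ht.2]⟩
  · intro t ht t' ht' hE
    rcases le_or_gt t s with h | h <;> rcases le_or_gt t' s with h' | h'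
    · rw [gl t h, gl t' h'] at hE
      exact i₁ ⟨ht.1, h.trans hs.2⟩ ⟨ht'.1, h'.trans hs.2⟩ hE
    · rw [gl t h, gr t' h'.le] at hE
      exact absurd hE (hlate _ (by linarith) (by linarith [ht'.2]) t ⟨ht.1, h.trans hs.2⟩)
    · rw [gl t' h', gr t h.le] at hE
      exact absurd hE.symm (hlate _ (by linarith) (by linarith [ht.2]) t' ⟨ht'.1, h'.trans hs.2⟩)
    · rw [gr t h.le, gr t' h'.le] at hE
      have := i₂ ⟨by linarith [ht₀.1], by linarith [ht.2]⟩
        ⟨by linarith [ht₀.1], by linarith [ht'.2]⟩ hE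
      linarith
  · intro t ht
    rcases le_or_gt t s with h | h
    · rw [gl t h]; exact m₁ ⟨ht.1, h.trans hs.2⟩
    · rw [gr t h.le]; exact m₂ ⟨by linarith [ht₀.1], by linarith [ht.2]⟩
  · rw [gl 0 hs.1, s₁]
  · rw [gr _ (by linarith [ht₀.2]), ← e₂]; congr 1; ring

lemma arcIn_ball {O : Set Strip} {x a b : Strip} {r : ℝ} (hO : Metric.ball x r ⊆ O)
    (ha : a ∈ Metric.ball x r) (hb : b ∈ Metric.ball x r) : ArcIn O a b := by
  by_cases hab : a = b
  · subst hab
    exact ⟨0, fun _ => a, le_refl _, continuousOn_const, by simp [InjOn],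
      fun _ _ => hO ha, rfl, rfl⟩
  have hconv : ∀ t ∈ Icc (0:ℝ) 1, (a.2 : ℝ) + t * (b.2 - a.2) ∈ Icc (0:ℝ) 1 := by
    intro t ht
    have h1 := a.2.2; have h2 := b.2.2
    constructor
    · nlinarith [ht.1, ht.2, h1.1, h2.1, mul_nonneg ht.1 h2.1,
        mul_nonneg (sub_nonneg.2 ht.2) h1.1]
    · nlinarith [ht.1, ht.2, h1.2, h2.2, mul_nonneg ht.1 (sub_nonneg.2 h2.2),
        mul_nonneg (sub_nonneg.2 ht.2) (sub_nonneg.2 h1.2)]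
  let g : ℝ → Strip := fun t => (a.1 + t * (b.1 - a.1),
    projIcc 0 1 zero_le_one ((a.2 : ℝ) + t * (b.2 - a.2)))
  have g2 : ∀ t ∈ Icc (0:ℝ) 1, ((g t).2 : ℝ) = (a.2 : ℝ) + t * (b.2 - a.2) := by
    intro t ht
    simp only [g]
    rw [projIcc_of_mem _ (hconv t ht)]
  refine ⟨1, g, zero_le_one, ?_, ?_, ?_, ?_, ?_⟩
  · apply Continuous.continuousOn
    refine Continuous.prodMk (by fun_prop) (continuous_projIcc.comp (by fun_prop))
  · intro t ht t' ht' hE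
    have e1 : a.1 + t * (b.1 - a.1) = a.1 + t' * (b.1 - a.1) := congrArg Prod.fst hE
    have e2 : (a.2 : ℝ) + t * (b.2 - a.2) = (a.2 : ℝ) + t' * (b.2 - a.2) := by
      rw [← g2 t ht, ← g2 t' ht', hE]
    by_contra hne
    apply hab
    have hne' : t - t' ≠ 0 := sub_ne_zero.2 hne
    have e3 : (t - t') * (b.1 - a.1) = 0 := by linarith
    have e4 : (t - t') * ((b.2:ℝ) - a.2) = 0 := by linarith
    have e5 := (mul_eq_zero.1 e3).resolve_left hne'
    have e6 := (mul_eq_zero.1 e4).resolve_left hne'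
    exact Prod.ext (by linarith) (Subtype.ext (by linarith))
  · intro t ht
    apply hO
    rw [Metric.mem_ball, Prod.dist_eq, max_lt_iff, Subtype.dist_eq, g2 t ht] at *
    have key : ∀ u v w : ℝ, dist u w < r → dist v w < r → dist (u + t * (v - u)) w < r := by
      intro u v w h1 h2
      have := (convex_ball w r) (x := u) (y := v) h1 h2 (sub_nonneg.2 ht.2) ht.1 (by ring)
      simp only [smul_eq_mul, Metric.mem_ball] at this
      rwa [show u + t * (v - u) = (1 - t) * u + t * v by ring]
    exact ⟨key _ _ _ ha.1 hb.1, key _ _ _ ha.2 hb.2⟩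
  · simp [g]
  · simp [g]

lemma arcIn_of_open {O : Set Strip} (hO : IsOpen O) (cO : IsPreconnected O) {x y : Strip}
    (hx : x ∈ O) (hy : y ∈ O) : ArcIn O x y := by
  refine cO.induction₂' (ArcIn O) ?_ (fun x y z _ _ _ h h' => h.trans h') hx hy
  intro x hx
  obtain ⟨r, hr, hb⟩ := Metric.isOpen_iff.1 hO x hx
  refine mem_nhdsWithin_of_mem_nhds ?_
  filter_upwards [Metric.ball_mem_nhds x hr] with z hz
  exact ⟨arcIn_ball hb (Metric.mem_ball_self hr) hz, arcIn_ball hb hz (Metric.mem_ball_self hr)⟩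

lemma exists_curve {O : Set Strip} (hO : IsOpen O) (cO : IsPreconnected O) {x y : Strip}
    (hx : x ∈ O) (hy : y ∈ O) (hx0 : (x.2 : ℝ) = 0) (hy1 : (y.2 : ℝ) = 1) :
    ∃ γ : unitInterval → Strip, JoinsBoundaryS γ ∧ range γ ⊆ O := by
  obtain ⟨b, g, hb, cg, ig, mg, g0, gb⟩ := arcIn_of_open hO cO hx hy
  have cy : ContinuousOn (fun t => ((g t).2 : ℝ)) (Icc 0 b) :=
    (continuous_subtype_val.comp continuous_snd).comp_continuousOn cg
  obtain ⟨s, ⟨hs, hs0⟩, smax⟩ := (isCompact_Icc.of_isClosed_subset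
    (cy.preimage_isClosed_of_isClosed isClosed_Icc (isClosed_singleton (x := (0:ℝ))))
      inter_subset_left).exists_isGreatest ⟨0, ⟨le_refl _, hb⟩, by simp [g0, hx0]⟩
  have cy' : ContinuousOn (fun t => ((g t).2 : ℝ)) (Icc s b) := cy.mono (Icc_subset_Icc_left hs.1)
  obtain ⟨u, ⟨hu, hu1⟩, umin⟩ := (isCompact_Icc.of_isClosed_subset
    (cy'.preimage_isClosed_of_isClosed isClosed_Icc (isClosed_singleton (x := (1:ℝ))))
      inter_subset_left).exists_isLeast ⟨b, ⟨hs.2, le_refl _⟩, by simp [gb, hy1]⟩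
  simp only [mem_preimage, mem_singleton_iff] at hs0 hu1
  have hsu : s < u := by
    rcases hu.1.eq_or_lt with h | h
    · rw [← h, hs0] at hu1; norm_num at hu1
    · exact h
  have hmap : ∀ t : unitInterval, s + t * (u - s) ∈ Icc 0 b := by
    intro t
    have h1 := t.2.1; have h2 := t.2.2
    constructor
    · nlinarith [hs.1]
    · nlinarith [hu.2]
  refine ⟨fun t => g (s + t * (u - s)), ⟨?_, ?_, ?_, ?_, ?_⟩, ?_⟩
  · rw [← continuousOn_univ]
    exact cg.comp (by fun_prop) (fun t _ => hmap t)
  · intro t t' h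
    have := ig (hmap t) (hmap t') h
    have h2 : (t : ℝ) * (u - s) = t' * (u - s) := by linarith
    exact Subtype.ext (mul_right_cancel₀ (by linarith : (u - s) ≠ 0) h2)
  · simpa using hs0
  · simpa using hu1
  · intro t ht0 ht1
    have p0 : (0:ℝ) < t := lt_of_le_of_ne t.2.1 (fun h => ht0 (Subtype.ext h.symm))
    have p1 : (t:ℝ) < 1 := lt_of_le_of_ne t.2.2 (fun h => ht1 (Subtype.ext h))
    have q0 : s < s + t * (u - s) := by nlinarith
    have q1 : s + t * (u - s) < u := by nlinarith
    constructor
    · refine lt_of_le_of_ne (g _).2.2.1 (fun h => ?_)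
      have := smax ⟨hmap t, h.symm⟩
      linarith
    · refine lt_of_le_of_ne (g _).2.2.2 (fun h => ?_)
      have := umin ⟨⟨q0.le, (hmap t).2⟩, h⟩
      linarith
  · rintro _ ⟨t, rfl⟩
    exact mg (hmap t)

/-- a connected open set containing far-left and far-right points meets every vertical curve -/
lemma separate {O : Set Strip} (hO : IsOpen O) (cO : IsPreconnected O) {γ : unitInterval → Strip}
    (hγ : JoinsBoundaryS γ) {x y : Strip} (hx : x ∈ O) (hy : y ∈ O)
    (hl : ∀ t, x.1 < (γ t).1) (hr : ∀ t, (γ t).1 < y.1) : ∃ t, γ t ∈ O := by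
  obtain ⟨b, g, hb, cg, ig, mg, g0, gb⟩ := arcIn_of_open hO cO hx hy
  have hmap : ∀ t : unitInterval, t * b ∈ Icc 0 b := by
    intro t
    have h1 := t.2.1; have h2 := t.2.2
    constructor
    · positivity
    · nlinarith
  obtain ⟨s, t, h⟩ := crossing (β := fun t : unitInterval => g (t * b)) (γ := γ) (by
    rw [← continuousOn_univ]
    exact cg.comp (by fun_prop) (fun t _ => hmap t)) hγ.1 hγ.2.2.1 hγ.2.2.2.1
    (by simpa [g0] using hl) (by simpa [gb] using hr)
  exact ⟨t, h ▸ mg (hmap s)⟩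

def eL : Filter Strip := comap Prod.fst atBot
def eR : Filter Strip := comap Prod.fst atTop

/-- the union of connected subsets of `A` containing the end `l` -/
def cmp (l : Filter Strip) (A : Set Strip) : Set Strip :=
  {x | ∃ C : Set Strip, IsPreconnected C ∧ C ⊆ A ∧ x ∈ C ∧ C ∈ l}

structure IsEnd (l : Filter Strip) : Prop where
  ne : l.NeBot
  bas : ∀ s ∈ l, ∃ t ∈ l, t ⊆ s ∧ IsPreconnected t

lemma mem_eL {s : Set Strip} : s ∈ eL ↔ ∃ M : ℝ, ∀ z : Strip, z.1 ≤ M → z ∈ s := by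
  rw [eL, (atBot_basis.comap Prod.fst).mem_iff]
  simp [subset_def]

lemma mem_eR {s : Set Strip} : s ∈ eR ↔ ∃ M : ℝ, ∀ z : Strip, M ≤ z.1 → z ∈ s := by
  rw [eR, (atTop_basis.comap Prod.fst).mem_iff]
  simp [subset_def]

lemma isEnd_eL : IsEnd eL where
  ne := by
    rw [← forall_mem_nonempty_iff_neBot]
    intro s hs
    obtain ⟨M, hM⟩ := mem_eL.1 hs
    exact ⟨(M, 0), hM _ le_rfl⟩
  bas := by
    intro s hs
    obtain ⟨M, hM⟩ := mem_eL.1 hs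
    refine ⟨Iic M ×ˢ univ, mem_eL.2 ⟨M, fun z hz => ⟨hz, mem_univ _⟩⟩, fun z hz => hM z hz.1, ?_⟩
    exact isPreconnected_Iic.prod isPreconnected_univ

lemma isEnd_eR : IsEnd eR where
  ne := by
    rw [← forall_mem_nonempty_iff_neBot]
    intro s hs
    obtain ⟨M, hM⟩ := mem_eR.1 hs
    exact ⟨(M, 0), hM _ le_rfl⟩
  bas := by
    intro s hs
    obtain ⟨M, hM⟩ := mem_eR.1 hs
    refine ⟨Ici M ×ˢ univ, mem_eR.2 ⟨M, fun z hz => ⟨hz, mem_univ _⟩⟩, fun z hz => hM z hz.1, ?_⟩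
    exact isPreconnected_Ici.prod isPreconnected_univ

section cmp
variable {l : Filter Strip} {A B D : Set Strip}

lemma cmp_subset : cmp l A ⊆ A := fun _ ⟨_, _, h, hx, _⟩ => h hx

lemma cmp_mono (h : A ⊆ B) : cmp l A ⊆ cmp l B :=
  fun _ ⟨C, c, hC, hx, hl⟩ => ⟨C, c, hC.trans h, hx, hl⟩

lemma subset_cmp (c : IsPreconnected D) (h : D ⊆ A) (hl : D ∈ l) : D ⊆ cmp l A :=
  fun _ hx => ⟨D, c, h, hx, hl⟩

lemma cmp_conn (hl : IsEnd l) : IsPreconnected (cmp l A) := by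
  refine isPreconnected_of_forall_pair ?_
  rintro x ⟨C, c, hC, hx, hCl⟩ y ⟨C', c', hC', hy, hCl'⟩
  have := hl.ne
  obtain ⟨z, hz, hz'⟩ := Filter.nonempty_of_mem (inter_mem hCl hCl')
  exact ⟨C ∪ C', union_subset (subset_cmp c hC hCl) (subset_cmp c' hC' hCl'), Or.inl hx,
    Or.inr hy, IsPreconnected.union z hz hz' c c'⟩

lemma cmp_mem (hl : IsEnd l) (hA : A ∈ l) : cmp l A ∈ l := by
  obtain ⟨t, ht, hts, c⟩ := hl.bas A hA
  exact mem_of_superset ht (subset_cmp c hts ht)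

lemma absorb (c : IsPreconnected D) (h : D ⊆ A) (hm : (D ∩ cmp l A).Nonempty) :
    D ⊆ cmp l A := by
  obtain ⟨z, hzD, C, c', hC, hz, hCl⟩ := hm
  intro x hx
  exact ⟨D ∪ C, IsPreconnected.union z hzD hz c c', union_subset h hC, Or.inl hx,
    mem_of_superset hCl subset_union_right⟩

lemma cmp_open (hA : IsOpen A) : IsOpen (cmp l A) := by
  rw [isOpen_iff_mem_nhds]
  intro x hx
  have hxA := cmp_subset hx
  have h1 : connectedComponentIn A x ∈ 𝓝 x := connectedComponentIn_mem_nhds (hA.mem_nhds hxA)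
  exact mem_of_superset h1 (absorb isPreconnected_connectedComponentIn
    (connectedComponentIn_subset _ _) ⟨x, mem_connectedComponentIn hxA, hx⟩)

lemma cmp_image {h : Strip → Strip} (hc : Continuous h) (hl : ∀ s ∈ l, h '' s ∈ l)
    (hAB : h '' A ⊆ B) : h '' cmp l A ⊆ cmp l B := by
  rintro _ ⟨x, ⟨C, c, hC, hx, hCl⟩, rfl⟩
  exact ⟨h '' C, c.image h hc.continuousOn, (image_mono hC).trans hAB, ⟨x, hx, rfl⟩, hl _ hCl⟩

/-- the complement of a component of the complement of a connected set is connected -/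
lemma compl_conn (cD : IsPreconnected D) (hD : IsClosed D) (hne : D.Nonempty) :
    IsPreconnected (cmp l Dᶜ)ᶜ := by
  obtain ⟨d, hd⟩ := hne
  have hsub : D ⊆ (cmp l Dᶜ)ᶜ := fun x hx h => cmp_subset h hx
  refine isPreconnected_of_forall d ?_
  intro y hy
  by_cases hyD : y ∈ D
  · exact ⟨D, hsub, hd, hyD, cD⟩
  set E := connectedComponentIn Dᶜ y
  have hyE : y ∈ E := mem_connectedComponentIn hyD
  have cE : IsPreconnected E := isPreconnected_connectedComponentIn
  have oE : IsOpen E := hD.isOpen_compl.connectedComponentIn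
  have hE : Disjoint E (cmp l Dᶜ) := by
    rw [Set.disjoint_left]
    intro z hz hz'
    exact hy (absorb cE (connectedComponentIn_subset _ _) ⟨z, hz, hz'⟩ hyE)
  have hE' : closure E ⊆ (cmp l Dᶜ)ᶜ :=
    (hE.closure_left (cmp_open hD.isOpen_compl)).subset_compl_right
  have hm : (closure E ∩ D).Nonempty := by
    by_contra hno
    have h1 : closure E ⊆ Dᶜ := fun z hz hzD => hno ⟨z, hz, hzD⟩
    have h2 : closure E ⊆ E := cE.closure.subset_connectedComponentIn (subset_closure hyE) h1
    have h3 : IsClopen E := ⟨isClosed_of_closure_subset h2, oE⟩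
    have h4 := h3.eq_univ ⟨y, hyE⟩
    exact (connectedComponentIn_subset Dᶜ y) (h4 ▸ mem_univ d : d ∈ E) hd
  obtain ⟨z, hz, hz'⟩ := hm
  exact ⟨closure E ∪ D, union_subset hE' hsub, Or.inr hd, Or.inl (subset_closure hyE),
    IsPreconnected.union z hz hz' cE.closure cD⟩

end cmp

structure Good (u : Strip → ℝ) : Prop where
  cont : Continuous u
  bd : ∃ K, ∀ x, |u x - x.1| ≤ K

def W (u : Strip → ℝ) (c : ℝ) : Set Strip := cmp eL {x | u x < c}
def V (u : Strip → ℝ) (c : ℝ) : Set Strip := cmp eR (closure (W u c))ᶜ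
def W' (u : Strip → ℝ) (c : ℝ) : Set Strip := cmp eL (closure (V u c))ᶜ

section good
variable {u : Strip → ℝ} {c c₁ c₂ : ℝ}

lemma Good.W_open (hu : Good u) : IsOpen (W u c) := cmp_open (isOpen_lt hu.cont continuous_const)
lemma V_open : IsOpen (V u c) := cmp_open isClosed_closure.isOpen_compl
lemma W'_open : IsOpen (W' u c) := cmp_open isClosed_closure.isOpen_compl
lemma V_conn : IsPreconnected (V u c) := cmp_conn isEnd_eR
lemma W'_conn : IsPreconnected (W' u c) := cmp_conn isEnd_eL
lemma W_conn : IsPreconnected (W u c) := cmp_conn isEnd_eL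

lemma Good.W_mem (hu : Good u) : W u c ∈ eL := by
  refine cmp_mem isEnd_eL (mem_eL.2 ?_)
  obtain ⟨K, hK⟩ := hu.bd
  refine ⟨c - K - 1, fun z hz => ?_⟩
  have := (abs_le.1 (hK z)).2
  show u z < c
  linarith

lemma Good.clW (hu : Good u) : closure (W u c) ⊆ {x | u x ≤ c} :=
  closure_minimal (fun x hx => le_of_lt (show u x < c from cmp_subset hx)) (isClosed_le hu.cont continuous_const)

lemma Good.V_mem (hu : Good u) : V u c ∈ eR := by
  refine cmp_mem isEnd_eR (mem_eR.2 ?_)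
  obtain ⟨K, hK⟩ := hu.bd
  refine ⟨c + K + 1, fun z hz h => ?_⟩
  have := (abs_le.1 (hK z)).1
  have h2 : u z ≤ c := hu.clW h
  linarith

lemma V_disj_W : Disjoint (V u c) (W u c) := by
  rw [Set.disjoint_left]
  exact fun x hx hx' => cmp_subset hx (subset_closure hx')

lemma Good.clV_disj_W (hu : Good u) : Disjoint (closure (V u c)) (W u c) :=
  V_disj_W.closure_left hu.W_open

lemma Good.W'_mem (hu : Good u) : W' u c ∈ eL :=
  cmp_mem isEnd_eL (mem_of_superset hu.W_mem hu.clV_disj_W.subset_compl_left)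

lemma V_disj_W' : Disjoint (V u c) (W' u c) := by
  rw [Set.disjoint_left]
  exact fun x hx hx' => cmp_subset hx' (subset_closure hx)

lemma W_mono (h : c₁ ≤ c₂) : W u c₁ ⊆ W u c₂ := cmp_mono (fun _ hx => lt_of_lt_of_le hx h)

lemma V_anti (h : c₁ ≤ c₂) : V u c₂ ⊆ V u c₁ :=
  cmp_mono (compl_subset_compl.2 (closure_mono (W_mono h)))

lemma VW'_disj (h : c₂ ≤ c₁) : Disjoint (V u c₁) (W' u c₂) :=
  V_disj_W'.mono_left (V_anti h)

lemma Good.clW_sub (hu : Good u) (h : c₁ < c₂) : closure (W u c₁) ⊆ W u c₂ :=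
  subset_cmp W_conn.closure (fun _ hx => lt_of_le_of_lt (hu.clW hx) h)
    (mem_of_superset hu.W_mem subset_closure)

lemma Good.clV_sub (hu : Good u) (h : c₁ < c₂) : closure (V u c₂) ⊆ V u c₁ :=
  subset_cmp V_conn.closure
    (fun _ hx hx' => Set.disjoint_left.1 hu.clV_disj_W hx (hu.clW_sub h hx'))
    (mem_of_superset hu.V_mem subset_closure)

lemma Good.cover (hu : Good u) (h : c₁ < c₂) : V u c₁ ∪ W' u c₂ = univ := by
  have hne : (closure (W u c₁)).Nonempty := by
    have := isEnd_eL.ne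
    exact (Filter.nonempty_of_mem hu.W_mem).mono subset_closure
  have h1 : IsPreconnected (V u c₁)ᶜ := compl_conn W_conn.closure isClosed_closure hne
  have h2 : (V u c₁)ᶜ ⊆ W' u c₂ := by
    refine subset_cmp h1 (compl_subset_compl.2 (hu.clV_sub h)) ?_
    exact mem_of_superset hu.W_mem V_disj_W.subset_compl_left
  rw [eq_univ_iff_forall]
  intro x
  by_cases hx : x ∈ V u c₁
  · exact Or.inl hx
  · exact Or.inr (h2 hx)

lemma Good.exists_curve (hu : Good u) (h : c₁ < c₂) :
    ∃ γ : unitInterval → Strip, JoinsBoundaryS γ ∧ range γ ⊆ V u c₁ ∩ W' u c₂ := by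
  have hc := hu.cover h
  have hconn := unicoh V_open W'_open V_conn W'_conn hc
  have line : ∀ y : unitInterval, ∃ x : Strip, x ∈ V u c₁ ∩ W' u c₂ ∧ x.2 = y := by
    intro y
    have : IsPreconnected ((fun x : ℝ => ((x, y) : Strip)) '' univ) :=
      isPreconnected_univ.image _ (by fun_prop)
    obtain ⟨M, hM⟩ := mem_eR.1 (hu.V_mem (c := c₁))
    obtain ⟨M', hM'⟩ := mem_eL.1 (hu.W'_mem (c := c₂))
    obtain ⟨_, ⟨x, -, rfl⟩, hx⟩ := this _ _ V_open W'_open (by rw [hc]; exact subset_univ _)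
      ⟨(M, y), ⟨M, mem_univ _, rfl⟩, hM _ le_rfl⟩ ⟨(M', y), ⟨M', mem_univ _, rfl⟩, hM' _ le_rfl⟩
    exact ⟨_, hx, rfl⟩
  obtain ⟨x, hx, hx0⟩ := line 0
  obtain ⟨y, hy, hy1⟩ := line 1
  exact VC.exists_curve (V_open.inter W'_open) hconn hx hy (by simp [hx0]) (by simp [hy1])

/-- bounded displacement -/
def BD (h : Strip → Strip) : Prop := ∃ C, ∀ x, |(h x).1 - x.1| ≤ C

lemma BD.symm {h : Strip ≃ₜ Strip} (hb : BD h) : BD h.symm := by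
  obtain ⟨C, hC⟩ := hb
  refine ⟨C, fun x => ?_⟩
  have := hC (h.symm x)
  rwa [h.apply_symm_apply, abs_sub_comm] at this

lemma BD.eL {h : Strip ≃ₜ Strip} (hb : BD h) : ∀ s ∈ eL, h '' s ∈ eL := by
  intro s hs
  obtain ⟨C, hC⟩ := hb.symm
  obtain ⟨M, hM⟩ := mem_eL.1 hs
  refine mem_eL.2 ⟨M - C, fun z hz => ⟨h.symm z, hM _ ?_, h.apply_symm_apply z⟩⟩
  linarith [(abs_le.1 (hC z)).2]

lemma BD.eR {h : Strip ≃ₜ Strip} (hb : BD h) : ∀ s ∈ eR, h '' s ∈ eR := by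
  intro s hs
  obtain ⟨C, hC⟩ := hb.symm
  obtain ⟨M, hM⟩ := mem_eR.1 hs
  refine mem_eR.2 ⟨M + C, fun z hz => ⟨h.symm z, hM _ ?_, h.apply_symm_apply z⟩⟩
  linarith [(abs_le.1 (hC z)).1]

section equi
variable {h : Strip ≃ₜ Strip} {a b : ℝ}

lemma W_up (hb : BD h) (hub : ∀ x, u (h x) ≤ u x + b) : h '' W u c ⊆ W u (c + b) := by
  refine cmp_image h.continuous hb.eL ?_
  rintro _ ⟨x, hx, rfl⟩
  have h1 : u x < c := hx
  have h2 := hub x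
  show u (h x) < c + b
  linarith

lemma W_low (hb : BD h) (hua : ∀ x, u x + a ≤ u (h x)) : W u (c + a) ⊆ h '' W u c := by
  have := W_up (u := u) (c := c + a) (h := h.symm) (b := -a) hb.symm (fun x => by
    have := hua (h.symm x)
    rw [h.apply_symm_apply] at this
    linarith)
  rw [show c + a + -a = c by ring] at this
  intro x hx
  exact ⟨h.symm x, this ⟨x, hx, rfl⟩, h.apply_symm_apply x⟩

lemma V_image (hb : BD h) (hua : ∀ x, u x + a ≤ u (h x)) : h '' V u c ⊆ V u (c + a) := by
  refine cmp_image h.continuous hb.eR ?_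
  rw [h.image_compl, h.image_closure]
  exact compl_subset_compl.2 (closure_mono (W_low hb hua))

lemma V_low (hb : BD h) (hub : ∀ x, u (h x) ≤ u x + b) : V u (c + b) ⊆ h '' V u c := by
  have := V_image (u := u) (c := c + b) (h := h.symm) (a := -b) hb.symm (fun x => by
    have := hub (h.symm x)
    rw [h.apply_symm_apply] at this
    linarith)
  rw [show c + b + -b = c by ring] at this
  intro x hx
  exact ⟨h.symm x, this ⟨x, hx, rfl⟩, h.apply_symm_apply x⟩

lemma W'_image (hb : BD h) (hub : ∀ x, u (h x) ≤ u x + b) : h '' W' u c ⊆ W' u (c + b) := by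
  refine cmp_image h.continuous hb.eL ?_
  rw [h.image_compl, h.image_closure]
  exact compl_subset_compl.2 (closure_mono (V_low hb hub))

end equi
end good

lemma curve_bdd {γ : unitInterval → Strip} (hγ : Continuous γ) :
    ∃ K, ∀ t, |(γ t).1| ≤ K := by
  obtain ⟨K, hK⟩ := (isCompact_range (f := fun t => (γ t).1) (by fun_prop)).isBounded.exists_norm_le
  exact ⟨K, fun t => hK _ ⟨t, rfl⟩⟩

lemma right_of {γ : unitInterval → Strip} (hγ : Continuous γ) {D : Set Strip}
    (cD : IsPreconnected D) (hD : D ∈ eR) (hd : Disjoint D (range γ)) : StrictlyRightS γ D := by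
  obtain ⟨K, hK⟩ := curve_bdd hγ
  obtain ⟨M, hM⟩ := mem_eR.1 hD
  intro x hx
  refine ⟨(max M (K + 1), 0), fun t => ?_, ?_⟩
  · exact ((abs_le.1 (hK t)).2.trans_lt (by linarith)).trans_le (le_max_right _ _)
  · exact cD.subset_connectedComponentIn (hM _ (le_max_left _ _)) hd.subset_compl_right hx

lemma left_of {γ : unitInterval → Strip} (hγ : Continuous γ) {D : Set Strip}
    (cD : IsPreconnected D) (hD : D ∈ eL) (hd : Disjoint D (range γ)) : StrictlyLeftS γ D := by
  obtain ⟨K, hK⟩ := curve_bdd hγ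
  obtain ⟨M, hM⟩ := mem_eL.1 hD
  intro x hx
  refine ⟨(min M (-K - 1), 0), fun t => ?_, ?_⟩
  · exact (min_le_right _ _).trans_lt (by linarith [(abs_le.1 (hK t)).1])
  · exact cD.subset_connectedComponentIn (hM _ (min_le_left _ _)) hd.subset_compl_right hx

lemma not_both {γ : unitInterval → Strip} (hγ : JoinsBoundaryS γ) {x : Strip}
    (h1 : OnRightS γ x) (h2 : OnLeftS γ x) : False := by
  obtain ⟨q, hq, hx⟩ := h1
  obtain ⟨q', hq', hx'⟩ := h2
  have hcl : IsOpen (range γ)ᶜ := (isCompact_range hγ.1).isClosed.isOpen_compl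
  have e1 := connectedComponentIn_eq hx
  have e2 := connectedComponentIn_eq hx'
  have mq : q ∈ connectedComponentIn (range γ)ᶜ x := by
    rw [← e1]
    refine mem_connectedComponentIn ?_
    rintro ⟨t, rfl⟩
    exact lt_irrefl _ (hq t)
  have mq' : q' ∈ connectedComponentIn (range γ)ᶜ x := by
    rw [← e2]
    refine mem_connectedComponentIn ?_
    rintro ⟨t, rfl⟩
    exact lt_irrefl _ (hq' t)
  obtain ⟨t, ht⟩ := separate hcl.connectedComponentIn isPreconnected_connectedComponentIn hγ mq' mq
    hq' hq
  exact connectedComponentIn_subset _ _ ht ⟨t, rfl⟩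

/-- horizontal translation -/
noncomputable def T (m : ℝ) : Strip ≃ₜ Strip :=
  (Homeomorph.addRight m).prodCongr (Homeomorph.refl _)

lemma T_apply (m : ℝ) (x : Strip) : T m x = (x.1 + m, x.2) := rfl

lemma pA_T (m : ℤ) (x : Strip) : pA (T m x) = pA x := by
  rw [T_apply]
  refine Prod.ext ?_ rfl
  show ((x.1 + m : ℝ) : AddCircle (1:ℝ)) = x.1
  rw [AddCircle.coe_add, (AddCircle.coe_eq_zero_iff (1:ℝ) (x := (m:ℝ))).2 ⟨m, by simp⟩, add_zero]

lemma pA_eq {x y : Strip} (h : pA x = pA y) : (∃ n : ℤ, x.1 - y.1 = n) ∧ x.2 = y.2 :=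
  ⟨coe_int (congrArg Prod.fst h), congrArg (fun z : Annulus => z.2) h⟩

lemma pA_eq' {x y : Strip} (h : pA x = pA y) : ∃ n : ℤ, x = T n y := by
  obtain ⟨⟨n, hn⟩, h2⟩ := pA_eq h
  exact ⟨n, Prod.ext (by rw [T_apply]; simp only; linarith) h2⟩

lemma pA_eq_fun {X : Type*} [TopologicalSpace X] [PreconnectedSpace X] [Nonempty X]
    {g h : X → Strip} (hg : Continuous g) (hh : Continuous h)
    (hp : ∀ t, pA (g t) = pA (h t)) : ∃ n : ℤ, ∀ t, g t = T n (h t) := by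
  obtain ⟨t₀⟩ := ‹Nonempty X›
  obtain ⟨n, hn⟩ := (pA_eq (hp t₀)).1
  refine ⟨n, fun t => Prod.ext ?_ (pA_eq (hp t)).2⟩
  have := int_const isPreconnected_univ (g := fun t => (g t).1 - (h t).1)
    (by fun_prop) (fun t _ => (pA_eq (hp t)).1) (mem_univ t) (mem_univ t₀)
  rw [T_apply]; simp only; linarith

lemma T_T (a b : ℝ) (x : Strip) : T a (T b x) = T (b + a) x := by
  simp only [T_apply, add_assoc]

lemma T_zero (x : Strip) : T 0 x = x := by simp [T_apply]

lemma deg {f : Annulus ≃ₜ Annulus} {ft : Strip ≃ₜ Strip} (h : IsLiftA f ft) :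
    ∃ d : ℤ, ∀ (m : ℤ) (x : Strip), ft (T m x) = T (d * m) (ft x) := by
  have h' : ∀ x, pA (ft x) = f (pA x) := fun x => congr_fun h x
  have key : ∀ m : ℤ, ∃ d : ℤ, ∀ x, ft (T m x) = T d (ft x) := fun m =>
    pA_eq_fun (by fun_prop) (by fun_prop) (fun x => by rw [h', pA_T, h'])
  obtain ⟨d, hd⟩ := key 1
  have hd' : ∀ x, ft (T 1 x) = T d (ft x) := by simpa using hd
  have hn : ∀ (n : ℕ) (x : Strip), ft (T n x) = T (d * n) (ft x) := by
    intro n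
    induction n with
    | zero => intro x; simp [T_zero]
    | succ n ih =>
      intro x
      push_cast
      rw [← T_T, hd', ih, T_T]; congr 2; ring
  refine ⟨d, fun m x => ?_⟩
  obtain ⟨n, rfl | rfl⟩ := m.eq_nat_or_neg
  · exact_mod_cast hn n x
  · have := hn n (T (-n) x)
    rw [T_T, neg_add_cancel, T_zero] at this
    rw [this, T_T]; push_cast
    rw [show (d:ℝ) * n + d * -n = 0 by ring, T_zero]

lemma lift_symm {f : Annulus ≃ₜ Annulus} {ft : Strip ≃ₜ Strip} (h : IsLiftA f ft) :
    IsLiftA f.symm ft.symm := by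
  funext x
  have := congr_fun h (ft.symm x)
  simp only [Function.comp, ft.apply_symm_apply] at this ⊢
  rw [this, f.symm_apply_apply]

lemma deg_sq {f : Annulus ≃ₜ Annulus} {ft : Strip ≃ₜ Strip} (h : IsLiftA f ft) {d : ℤ}
    (hd : ∀ (m : ℤ) (x : Strip), ft (T m x) = T (d * m) (ft x)) : d = 1 ∨ d = -1 := by
  obtain ⟨d', hd'⟩ := deg (lift_symm h)
  have h1 := hd 1 (0, 0)
  have h2 := hd' d (ft (0, 0))
  rw [ft.symm_apply_apply] at h2
  have h3 : ft.symm (T (d * (1:ℤ)) (ft (0,0))) = T (1:ℤ) (0,0) := by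
    rw [← h1, ft.symm_apply_apply]
  push_cast at h3
  rw [mul_one, h2] at h3
  have h4 := congrArg Prod.fst h3
  simp only [T_apply, zero_add] at h4
  have h5 : d' * d = 1 := by exact_mod_cast h4
  exact Int.isUnit_iff.1 (IsUnit.of_mul_eq_one d' (by rw [mul_comm]; exact h5))

lemma iter_T {ft : Strip → Strip} {d : ℤ}
    (hd : ∀ (m : ℤ) (x : Strip), ft (T m x) = T (d * m) (ft x)) (k : ℕ) (m : ℤ) (x : Strip) :
    ft^[k] (T m x) = T (d ^ k * m) (ft^[k] x) := by
  induction k with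
  | zero => simp
  | succ k ih =>
    rw [Function.iterate_succ_apply', ih, Function.iterate_succ_apply']
    have := hd (d ^ k * m) (ft^[k] x)
    push_cast at this
    rw [this]; congr 2; ring

lemma deg_one {f : Annulus ≃ₜ Annulus} {ft : Strip ≃ₜ Strip} (h : IsLiftA f ft) {r : ℝ}
    (hrot : rotSet ft = {r}) : ∀ (m : ℤ) (x : Strip), ft (T m x) = T m (ft x) := by
  obtain ⟨d, hd⟩ := deg h
  rcases deg_sq h hd with rfl | rfl
  · simpa using hd
  exfalso
  have key : ∀ e : ℤ, (2 * e : ℝ) ∈ rotSet ft := by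
    intro e
    let D : ℕ → ℝ := fun k => ((⇑ft)^[2 * k + 1] (0, 0)).1
    let M : ℕ → ℤ := fun k => ⌊D k / 2⌋ - e * (2 * k + 1)
    refine ⟨fun k => 2 * k + 1, fun k => T (M k) (0, 0), ?_, ?_⟩
    · exact tendsto_atTop_mono (fun k => by show k ≤ 2 * k + 1; omega) tendsto_id
    have e1 : ∀ k : ℕ, (((⇑ft)^[2 * k + 1] (T (M k) (0,0))).1 - (T (M k) (0,0) : Strip).1)
        / ((2 * k + 1 : ℕ) : ℝ) = 2 * e + (D k - 2 * ⌊D k / 2⌋) / ((2 * k + 1 : ℕ) : ℝ) := by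
      intro k
      rw [iter_T hd]
      simp only [T_apply]
      have hodd : ((-1 : ℤ) : ℝ) ^ (2 * k + 1) = -1 := by
        push_cast
        exact Odd.neg_one_pow ⟨k, rfl⟩
      rw [hodd]
      have hk : ((2 * k + 1 : ℕ) : ℝ) ≠ 0 := by positivity
      field_simp
      simp only [D, M]
      push_cast
      ring
    simp only
    simp_rw [e1]
    have hz : Tendsto (fun k : ℕ => (D k - 2 * ⌊D k / 2⌋) / ((2 * k + 1 : ℕ) : ℝ)) atTop (𝓝 0) := by
      have hlim : Tendsto (fun k : ℕ => (2:ℝ) / ((2 * k + 1 : ℕ) : ℝ)) atTop (𝓝 0) :=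
        (tendsto_const_div_atTop_nhds_zero_nat (2:ℝ)).comp
          (tendsto_atTop_mono (fun k => by show k ≤ 2 * k + 1; omega) tendsto_id)
      refine squeeze_zero (fun k => ?_) (fun k => ?_) hlim
      · have := Int.floor_le (D k / 2)
        exact div_nonneg (by linarith) (by positivity)
      · have := Int.lt_floor_add_one (D k / 2)
        gcongr
        linarith
    simpa using hz.const_add (2 * (e:ℝ))
  have h0 := key 0
  have h1 := key 1
  rw [hrot, mem_singleton_iff] at h0 h1
  push_cast at h0 h1
  linarith

lemma bdd_of_periodic {φ : Strip → ℝ} (hc : Continuous φ) (hp : ∀ (m : ℤ) x, φ (T m x) = φ x) :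
    ∃ C, ∀ x, |φ x| ≤ C := by
  have hK : IsCompact (Icc (0:ℝ) 1 ×ˢ (univ : Set unitInterval)) := isCompact_Icc.prod isCompact_univ
  obtain ⟨C, hC⟩ := (hK.image hc).isBounded.exists_norm_le
  refine ⟨C, fun x => ?_⟩
  rw [← hp (-⌊x.1⌋) x]
  refine hC _ ⟨_, ⟨?_, mem_univ _⟩, rfl⟩
  rw [T_apply]
  push_cast
  exact ⟨by linarith [Int.floor_le x.1], by linarith [Int.lt_floor_add_one x.1]⟩

lemma iter_bdd {ft : Strip → Strip} {C : ℝ} (hC : ∀ x, |(ft x).1 - x.1| ≤ C) (k : ℕ) (x : Strip) :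
    |(ft^[k] x).1 - x.1| ≤ k * C := by
  induction k with
  | zero => simp
  | succ k ih =>
    rw [Function.iterate_succ_apply']
    have := hC (ft^[k] x)
    push_cast
    rw [abs_le] at *
    constructor <;> linarith [ih.1, ih.2, this.1, this.2]

lemma uniform {ft : Strip ≃ₜ Strip} (hb : BD ft) {r : ℝ} (hrot : rotSet ft = {r}) {ε : ℝ}
    (hε : 0 < ε) : ∃ M : ℕ, 0 < M ∧ ∀ x, |(((⇑ft)^[M] x).1 - x.1) / M - r| ≤ ε := by
  by_contra hno
  push Not at hno
  choose x hx using fun M : ℕ => hno (M + 1) (Nat.succ_pos _)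
  obtain ⟨C, hC⟩ := hb
  let a : ℕ → ℝ := fun M => (((⇑ft)^[M+1] (x M)).1 - (x M).1) / ((M + 1 : ℕ) : ℝ)
  have ha : ∀ M, a M ∈ Icc (-C) C := by
    intro M
    refine abs_le.1 ?_
    have := iter_bdd hC (M+1) (x M)
    simp only [a]
    rw [abs_div, Nat.abs_cast, div_le_iff₀ (by positivity)]
    linarith
  obtain ⟨l, -, φ, hφ, hl⟩ := isCompact_Icc.tendsto_subseq ha
  have hmem : l ∈ rotSet ft := by
    refine ⟨fun k => φ k + 1, fun k => x (φ k), ?_, hl⟩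
    exact tendsto_atTop_mono (fun k => Nat.le_succ _) hφ.tendsto_atTop
  rw [hrot, mem_singleton_iff] at hmem
  subst hmem
  have hev : ∀ᶠ k in atTop, dist ((a ∘ φ) k) l < ε := (Metric.tendsto_nhds.1 hl) ε hε
  obtain ⟨k, hk⟩ := hev.exists
  rw [Real.dist_eq] at hk
  exact absurd hk (not_lt.2 (hx (φ k)).le)

lemma exists_u {ft : Strip ≃ₜ Strip} (hT : ∀ (m : ℤ) (x : Strip), ft (T m x) = T m (ft x))
    (hb : BD ft) {r : ℝ} (hrot : rotSet ft = {r}) {ε : ℝ} (hε : 0 < ε) :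
    ∃ u : Strip → ℝ, Good u ∧ (∀ (m : ℤ) x, u (T m x) = u x + m) ∧
      ∀ x, |u (ft x) - u x - r| ≤ ε := by
  obtain ⟨M, hM, hu⟩ := uniform hb hrot hε
  have hM' : (M : ℝ) ≠ 0 := by positivity
  let u : Strip → ℝ := fun x => (∑ k ∈ Finset.range M, (((⇑ft)^[k] x).1 - k * r)) / M
  have hcont : Continuous u := by
    refine Continuous.div_const (continuous_finsetSum _ (fun k _ => ?_)) _
    exact (continuous_fst.comp (ft.continuous.iterate k)).sub continuous_const
  have hper : ∀ (m : ℤ) x, u (T m x) = u x + m := by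
    intro m x
    have : ∀ k, (⇑ft)^[k] (T m x) = T m ((⇑ft)^[k] x) := fun k => by
      have := iter_T (ft := ft) (d := 1) (by simpa using hT) k m x
      simpa using this
    simp only [u, this]
    simp only [T_apply]
    rw [eq_comm, div_add' _ _ _ hM']
    congr 1
    have : (m : ℝ) * M = ∑ k ∈ Finset.range M, (m : ℝ) := by simp [mul_comm]
    rw [this, ← Finset.sum_add_distrib]
    exact Finset.sum_congr rfl (fun k _ => by ring)
  refine ⟨u, ⟨hcont, ?_⟩, hper, fun x => ?_⟩
  · refine bdd_of_periodic (φ := fun x => u x - x.1) (hcont.sub continuous_fst) (fun m x => ?_)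
    show u (T m x) - (T m x).1 = u x - x.1
    rw [hper, T_apply]; ring
  · have e : u (ft x) - u x = (((⇑ft)^[M] x).1 - x.1) / M := by
      simp only [u]
      rw [← sub_div]
      congr 1
      have h1 : ∀ k, ((⇑ft)^[k] (ft x)).1 - k * r = (((⇑ft)^[k+1] x).1 - ((k+1 : ℕ):ℝ) * r) + r := by
        intro k; rw [Function.iterate_succ_apply]; push_cast; ring
      rw [Finset.sum_congr rfl (fun k _ => h1 k), Finset.sum_add_distrib]
      have h2 := Finset.sum_range_succ (fun k : ℕ => ((⇑ft)^[k] x).1 - k * r) M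
      have h3 := Finset.sum_range_succ' (fun k : ℕ => ((⇑ft)^[k] x).1 - k * r) M
      simp only [Finset.sum_const, Finset.card_range, nsmul_eq_mul, Function.iterate_zero, id] at *
      push_cast at *
      linarith
    rw [e]
    exact hu x

lemma W'_mono {u : Strip → ℝ} {c₁ c₂ : ℝ} (h : c₁ ≤ c₂) : W' u c₁ ⊆ W' u c₂ :=
  cmp_mono (compl_subset_compl.2 (closure_mono (V_anti h)))

lemma BD_T (m : ℝ) : BD (T m) := ⟨|m|, fun x => by simp [T_apply]⟩

lemma joins_T {γ : unitInterval → Strip} (hγ : JoinsBoundaryS γ) (m : ℝ) :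
    JoinsBoundaryS (fun t => T m (γ t)) :=
  ⟨(T m).continuous.comp hγ.1, (T m).injective.comp hγ.2.1, hγ.2.2.1, hγ.2.2.2.1, hγ.2.2.2.2⟩


lemma family {u : Strip → ℝ} (hu : Good u) (hper : ∀ (m : ℤ) x, u (T m x) = u x + m)
    (m : ℕ) [NeZero m] {δ : ℝ} (hδ : 0 < δ) :
    ∃ γt : ℤ → unitInterval → Strip, (∀ j, JoinsBoundaryS (γt j)) ∧
      (∀ j : ℤ, range (γt j) ⊆ V u (j * (1 / m) - δ) ∩ W' u (j * (1 / m) + δ)) ∧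
      (∀ (j r : ℤ) t, γt (j + m * r) t = T r (γt j t)) := by
  have hm0 : (m : ℤ) ≠ 0 := by exact_mod_cast NeZero.ne m
  have hm1 : (m : ℝ) ≠ 0 := by exact_mod_cast NeZero.ne m
  choose c hc1 hc2 using fun j : ℤ => hu.exists_curve
    (show (j : ℝ) * (1 / m) - δ < j * (1 / m) + δ by linarith)
  refine ⟨fun j t => T ((j / m : ℤ) : ℝ) (c (j % m) t), fun j => joins_T (hc1 _) _, ?_, ?_⟩
  · rintro j _ ⟨t, rfl⟩
    have h := hc2 (j % m) ⟨t, rfl⟩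
    have e : ((j % m : ℤ) : ℝ) * (1 / m) + ((j / m : ℤ) : ℝ) = j * (1 / m) := by
      have : ((j % m : ℤ) : ℝ) + m * ((j / m : ℤ) : ℝ) = j := by
        exact_mod_cast Int.emod_add_mul_ediv j m
      rw [← this]; field_simp
    constructor
    · have := V_image (h := T ((j / m : ℤ) : ℝ)) (BD_T _)
        (fun x => (hper (j / m) x).ge) (mem_image_of_mem _ h.1)
      rw [← e]
      convert this using 2
      ring
    · have := W'_image (h := T ((j / m : ℤ) : ℝ)) (BD_T _)
        (fun x => (hper (j / m) x).le) (mem_image_of_mem _ h.2)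
      rw [← e]
      convert this using 2
      ring
  · intro j r t
    simp only
    rw [Int.add_mul_ediv_left _ _ hm0, Int.add_mul_emod_self_left, T_T]
    push_cast
    rfl

lemma V_iter {ft : Strip ≃ₜ Strip} (hb : BD ft) {u : Strip → ℝ} {a : ℝ}
    (hu : ∀ x, u x + a ≤ u (ft x)) (k : ℕ) {c : ℝ} {x : Strip} (hx : x ∈ V u c) :
    (⇑ft)^[k] x ∈ V u (c + k * a) := by
  induction k with
  | zero => simpa using hx
  | succ k ih =>
    rw [Function.iterate_succ_apply']
    have := V_image hb hu (mem_image_of_mem _ ih)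
    convert this using 2
    push_cast; ring

lemma W'_iter {ft : Strip ≃ₜ Strip} (hb : BD ft) {u : Strip → ℝ} {a : ℝ}
    (hu : ∀ x, u (ft x) ≤ u x + a) (k : ℕ) {c : ℝ} {x : Strip} (hx : x ∈ W' u c) :
    (⇑ft)^[k] x ∈ W' u (c + k * a) := by
  induction k with
  | zero => simpa using hx
  | succ k ih =>
    rw [Function.iterate_succ_apply']
    have := W'_image hb hu (mem_image_of_mem _ ih)
    convert this using 2
    push_cast; ring

lemma not_right_self {γ : unitInterval → Strip} (h : StrictlyRightS γ (range γ)) : False := by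
  obtain ⟨q, -, hx⟩ := h _ ⟨0, rfl⟩
  exact connectedComponentIn_subset _ _ hx ⟨0, rfl⟩

lemma pA_iter {f : Annulus ≃ₜ Annulus} {ft : Strip ≃ₜ Strip} (h : IsLiftA f ft) (k : ℕ)
    (x : Strip) : pA ((⇑ft)^[k] x) = (⇑f)^[k] (pA x) := by
  induction k with
  | zero => rfl
  | succ k ih =>
    rw [Function.iterate_succ_apply', Function.iterate_succ_apply', ← ih]
    exact congr_fun h _

lemma pA_cont : Continuous pA :=
  (AddCircle.continuous_mk' (1:ℝ) |>.comp continuous_fst).prodMk continuous_snd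

theorem main
    (f : Annulus ≃ₜ Annulus)
    (ft : Strip ≃ₜ Strip) (hlift : IsLiftA f ft)
    (p q : ℕ) (hq : 0 < q)
    (hrot : rotSet ft = {(p : ℝ) / (q : ℝ)})
    (n N : ℕ) (hn : 0 < n) (hN : 0 < N) :
    ∃ γ' : ZMod (n * q) → unitInterval → Annulus,
      (∀ i, JoinsBoundaryA (γ' i)) ∧
      (∀ i j, i ≠ j → Disjoint (Set.range (γ' i)) (Set.range (γ' j))) ∧
      ∀ (i : ZMod (n * q)) (k : ℕ), k ≤ N →
        ((n ≠ 1 ∨ q ≠ 1) →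
          StrictlyBetween (γ' (i + (k * n * p : ℕ) - 1)) (fun t => (⇑f)^[k] (γ' i t))
            (γ' (i + (k * n * p : ℕ) + 1))) ∧
        (n = 1 → q = 1 →
          ∀ L m₁ m₂ : unitInterval → Strip,
            IsCurveLift (fun t => (⇑f)^[k] (γ' 1 t)) L →
            IsCurveLift (γ' 1) m₁ → IsCurveLift (γ' 1) m₂ →
            (Set.range L ∩ Set.range m₁).Nonempty →
            (Set.range L ∩ Set.range m₂).Nonempty → m₁ = m₂) := by
  have hT := deg_one hlift hrot
  have hb : BD ft := by
    refine bdd_of_periodic (φ := fun x => (ft x).1 - x.1)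
      ((continuous_fst.comp ft.continuous).sub continuous_fst) (fun m x => ?_)
    show (ft (T m x)).1 - (T m x).1 = (ft x).1 - x.1
    rw [hT]; simp only [T_apply]; ring
  have hmge : 2 ≤ n * q ∨ (n = 1 ∧ q = 1) := by
    rcases Nat.lt_or_ge 1 (n * q) with h | h
    · exact Or.inl h
    · right
      have h1 : n * q = 1 := le_antisymm h (Nat.mul_pos hn hq)
      exact mul_eq_one.1 h1
  have hs' : (p : ℝ) / q = (n * p : ℕ) * (1 / (n * q : ℕ)) := by
    push_cast; field_simp
  have hmpos : 0 < n * q := Nat.mul_pos hn hq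
  generalize hm : n * q = m at *
  haveI : NeZero m := ⟨hmpos.ne'⟩
  have hm0 : (0:ℝ) < m := by exact_mod_cast hmpos
  have hmz : (m : ℤ) ≠ 0 := by exact_mod_cast hmpos.ne'
  set s : ℝ := 1 / m with hs
  have hsp : 0 < s := by positivity
  set δ : ℝ := s / 8 with hδ
  have hδp : 0 < δ := by positivity
  have hNp : (0:ℝ) < N := by exact_mod_cast hN
  obtain ⟨u, hu, hper, hue⟩ := exists_u hT hb hrot (ε := δ / N) (by positivity)
  obtain ⟨γt, P1, P2, PT⟩ := family hu hper m hδp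
  -- images of curves
  have img : ∀ (k : ℕ), k ≤ N → ∀ (j r : ℤ) (t : unitInterval),
      T r ((⇑ft)^[k] (γt j t)) ∈ V u (((j + k * n * p + m * r : ℤ) : ℝ) * s - 2 * δ) ∩
        W' u (((j + k * n * p + m * r : ℤ) : ℝ) * s + 2 * δ) := by
    intro k hk j r t
    have hj := P2 j ⟨t, rfl⟩
    have hkN : (k : ℝ) * (δ / N) ≤ δ := by
      have : (k : ℝ) ≤ N := by exact_mod_cast hk
      rw [mul_div_assoc', div_le_iff₀ hNp]
      nlinarith
    have hms : (m : ℝ) * s = 1 := by rw [hs]; field_simp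
    have e : ((j + k * n * p + m * r : ℤ) : ℝ) * s = j * s + k * (p / q) + r := by
      rw [hs']; push_cast; linear_combination (r : ℝ) * hms
    constructor
    · have h1 := V_iter hb (a := p / q - δ / N)
        (fun x => by have := (abs_le.1 (hue x)).1; linarith) k hj.1
      have h2 := V_image (h := T r) (BD_T _) (fun x => (hper r x).ge) (mem_image_of_mem _ h1)
      refine V_anti ?_ h2
      rw [e]; linarith
    · have h1 := W'_iter hb (a := p / q + δ / N)
        (fun x => by have := (abs_le.1 (hue x)).2; linarith) k hj.2
      have h2 := W'_image (h := T r) (BD_T _) (fun x => (hper r x).le) (mem_image_of_mem _ h1)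
      refine W'_mono ?_ h2
      rw [e]; linarith
  -- comparison of integers
  have cmpz : ∀ {a b : ℤ}, a < b → (a : ℝ) * s + 8 * δ ≤ b * s := by
    intro a b hab
    have h1 : (a : ℝ) + 1 ≤ b := by exact_mod_cast hab
    have h2 : (8:ℝ) * δ = s := by rw [hδ]; ring
    rw [h2]; nlinarith
  -- a point close to two integers
  have same : ∀ {a b : ℤ} {x : Strip},
      x ∈ V u ((a : ℝ) * s - 2 * δ) ∩ W' u ((a : ℝ) * s + 2 * δ) →
      x ∈ V u ((b : ℝ) * s - 2 * δ) ∩ W' u ((b : ℝ) * s + 2 * δ) → a = b := by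
    intro a b x ha hb
    rcases lt_trichotomy a b with h | h | h
    · have := cmpz h
      exact absurd ha.2 (disjoint_left.1 (VW'_disj (by linarith)) hb.1)
    · exact h
    · have := cmpz h
      exact absurd hb.2 (disjoint_left.1 (VW'_disj (by linarith)) ha.1)
  have P2' : ∀ (j : ℤ) t, γt j t ∈ V u ((j : ℝ) * s - 2 * δ) ∩ W' u ((j : ℝ) * s + 2 * δ) :=
    fun j t => ⟨V_anti (by linarith) (P2 j ⟨t, rfl⟩).1, W'_mono (by linarith) (P2 j ⟨t, rfl⟩).2⟩
  have P5 : ∀ {a b : ℤ} {t t' : unitInterval}, γt a t = γt b t' → a = b ∧ t = t' := by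
    intro a b t t' h
    have hab : a = b := same (P2' a t) (h ▸ P2' b t')
    subst hab
    exact ⟨rfl, (P1 a).2.1 h⟩
  have P6 : ∀ {a b : ℤ} {t t' : unitInterval}, pA (γt a t) = pA (γt b t') →
      (∃ r, a = b + m * r) ∧ t = t' := by
    intro a b t t' h
    obtain ⟨r, hr⟩ := pA_eq' h
    rw [← PT] at hr
    exact ⟨⟨r, (P5 hr).1⟩, (P5 hr).2⟩
  have P3 : ∀ (j : ℤ), (fun t => pA (γt ((j : ZMod m).val : ℤ) t)) = fun t => pA (γt j t) := by
    intro j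
    funext t
    rw [ZMod.val_intCast]
    conv_rhs => rw [← Int.emod_add_mul_ediv j m, PT, pA_T]
  have P4 : ∀ (j : ℤ) (L : unitInterval → Strip), IsCurveLift (fun t => pA (γt j t)) L →
      ∃ r : ℤ, L = γt (j + m * r) := by
    intro j L hL
    obtain ⟨r, hr⟩ := pA_eq_fun hL.1 (P1 j).1 (fun t => congr_fun hL.2 t)
    exact ⟨r, funext fun t => by rw [hr, PT]⟩
  refine ⟨fun i t => pA (γt (i.val : ℤ) t), fun i => ?_, fun i j hij => ?_, fun i k hk => ⟨?_, ?_⟩⟩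
  · exact ⟨pA_cont.comp (P1 _).1, fun t t' h => (P6 h).2, (P1 _).2.2.1, (P1 _).2.2.2.1,
      (P1 _).2.2.2.2⟩
  · rw [disjoint_left]
    rintro _ ⟨t, rfl⟩ ⟨t', h⟩
    obtain ⟨⟨r, hr⟩, -⟩ := P6 h
    apply hij
    have := congrArg (fun z : ℤ => (z : ZMod m)) hr
    simpa using this.symm
  · intro hnq
    have hm2 : 2 ≤ m := by
      rcases hmge with h | h
      · exact h
      · exact absurd h (by tauto)
    set j : ℤ := (i.val : ℤ) with hj
    set J : ℤ := j + k * n * p with hJ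
    have hJi : i + (k * n * p : ℕ) = ((J : ℤ) : ZMod m) := by
      rw [hJ, hj]; push_cast; simp
    have e1 : (fun t => pA (γt ((i + (k * n * p : ℕ) - 1).val : ℤ) t))
        = fun t => pA (γt (J - 1) t) := by
      rw [← P3 (J - 1), hJi]; push_cast; rfl
    have e3 : (fun t => pA (γt ((i + (k * n * p : ℕ) + 1).val : ℤ) t))
        = fun t => pA (γt (J + 1) t) := by
      rw [← P3 (J + 1), hJi]; push_cast; rfl
    show StrictlyBetween (fun t => pA (γt ((i + (k * n * p : ℕ) - 1).val : ℤ) t)) _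
      (fun t => pA (γt ((i + (k * n * p : ℕ) + 1).val : ℤ) t))
    rw [e1, e3]
    have im : ∀ t, (⇑ft)^[k] (γt j t) ∈ V u ((J : ℝ) * s - 2 * δ) ∩ W' u ((J : ℝ) * s + 2 * δ) := by
      intro t
      have := img k hk j 0 t
      rw [mul_zero, add_zero, Int.cast_zero, T_zero] at this
      exact this
    refine ⟨γt (J - 1), fun t => (⇑ft)^[k] (γt j t), ⟨(P1 _).1, rfl⟩,
      ⟨(ft.continuous.iterate k).comp (P1 j).1, funext fun t => pA_iter hlift k _⟩, ?_, ?_⟩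
    · rintro _ ⟨t, rfl⟩
      refine right_of (P1 (J-1)).1 V_conn hu.V_mem ?_ _ (im t).1
      rw [disjoint_left]
      rintro x hx ⟨t', rfl⟩
      have := cmpz (show J - 1 < J by omega)
      exact disjoint_left.1 (VW'_disj (by linarith)) hx (P2' (J - 1) t').2
    · intro L hL hR
      obtain ⟨r, rfl⟩ := P4 _ L hL
      rcases le_or_gt 0 r with hr | hr
      · rintro _ ⟨t, rfl⟩
        refine left_of (P1 _).1 W'_conn hu.W'_mem ?_ _ (im t).2
        rw [disjoint_left]
        rintro x hx ⟨t', rfl⟩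
        have := cmpz (show J < J + 1 + m * r by nlinarith)
        exact disjoint_left.1 (VW'_disj (by linarith)) (P2' (J + 1 + m * r) t').1 hx
      · exfalso
        have hle : J + 1 + m * r ≤ J - 1 := by
          have : (2:ℤ) ≤ m := by exact_mod_cast hm2
          nlinarith
        rcases hle.eq_or_lt with h | h
        · rw [h] at hR
          exact not_right_self hR
        · refine not_both (P1 (J - 1)) (hR _ ⟨0, rfl⟩) ?_
          refine left_of (P1 _).1 W'_conn hu.W'_mem ?_ _ (P2' (J + 1 + m * r) 0).2
          rw [disjoint_left]
          rintro x hx ⟨t', rfl⟩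
          have := cmpz h
          exact disjoint_left.1 (VW'_disj (by linarith)) (P2' (J - 1) t').1 hx
  · intro _ _ L m₁ m₂ hL h₁ h₂ hn₁ hn₂
    simp only at hL h₁ h₂
    set j : ℤ := (((1 : ZMod m).val : ℕ) : ℤ) with hj
    obtain ⟨r, hr⟩ := pA_eq_fun hL.1 ((ft.continuous.iterate k).comp (P1 j).1)
      (fun t => (congr_fun hL.2 t).trans (pA_iter hlift k _).symm)
    obtain ⟨a, rfl⟩ := P4 _ _ h₁
    obtain ⟨b, rfl⟩ := P4 _ _ h₂
    have key : ∀ c : ℤ, (range L ∩ range (γt c)).Nonempty → c = j + k * n * p + m * r := by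
      rintro c ⟨_, ⟨t, rfl⟩, ⟨t', ht'⟩⟩
      refine same (P2' c t') ?_
      rw [ht', hr]
      exact img k hk j r t
    rw [key _ hn₁, key _ hn₂]

end VC

/-- **Proposition.** Let `f ∈ Homeo₀(𝔸)` have a lift with rotation set `{p/q}`, where
either `q > 0`, `0 < p < q` and `p, q` are coprime, or `p = 0` and `q = 1`. Then for all
integers `n > 0` and `N > 0` there is a family `(γ'_i)_{i ∈ ℤ/nqℤ}` of pairwise disjoint
simple curves joining the two boundary components of the annulus such that, for every `i`
and every `0 ≤ k ≤ N`: if `n ≠ 1` or `q ≠ 1`, the curve `f^k(γ'_i)` lies strictly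
between `γ'_{i+knp-1}` and `γ'_{i+knp+1}`; and if `n = q = 1`, any lift of the curve
`f^k(γ'_1)` meets at most one lift of the curve `γ'_1`. -/
theorem vertical_curves_of_rational_pseudoRotation_iterates
    (f : Annulus ≃ₜ Annulus) (hf : IsotopicToId f)
    (ft : Strip ≃ₜ Strip) (hlift : IsLiftA f ft)
    (p q : ℕ) (hpq : (0 < p ∧ p < q ∧ Nat.Coprime p q) ∨ (p = 0 ∧ q = 1))
    (hrot : rotSet ft = {(p : ℝ) / (q : ℝ)})
    (n N : ℕ) (hn : 0 < n) (hN : 0 < N) :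
    ∃ γ' : ZMod (n * q) → unitInterval → Annulus,
      (∀ i, JoinsBoundaryA (γ' i)) ∧
      (∀ i j, i ≠ j → Disjoint (Set.range (γ' i)) (Set.range (γ' j))) ∧
      ∀ (i : ZMod (n * q)) (k : ℕ), k ≤ N →
        ((n ≠ 1 ∨ q ≠ 1) →
          StrictlyBetween (γ' (i + (k * n * p : ℕ) - 1)) (fun t => (⇑f)^[k] (γ' i t))
            (γ' (i + (k * n * p : ℕ) + 1))) ∧
        (n = 1 → q = 1 →
          ∀ L m₁ m₂ : unitInterval → Strip,
            IsCurveLift (fun t => (⇑f)^[k] (γ' 1 t)) L →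
            IsCurveLift (γ' 1) m₁ → IsCurveLift (γ' 1) m₂ →
            (Set.range L ∩ Set.range m₁).Nonempty →
            (Set.range L ∩ Set.range m₂).Nonempty → m₁ = m₂) := by
  have hq : 0 < q := by omega
  exact VC.main f ft hlift p q hq hrot n N hn hN
end

section
/- For every α ∈ ℝ/ℤ, the rotation R_α : (θ,t) ↦ (θ+α, t) of the closed annulus 𝔸 is a distortion element of the group Homeo₀(𝔸). -/
open Filter Topology Set

/-- The group of homeomorphisms of `X`, with `f * g = f ∘ g`. -/
noncomputable instance {X : Type*} [TopologicalSpace X] : Group (X ≃ₜ X) where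
  mul f g := g.trans f
  one := Homeomorph.refl X
  inv := Homeomorph.symm
  mul_assoc f g h := rfl
  one_mul f := Homeomorph.ext fun _ => rfl
  mul_one f := Homeomorph.ext fun _ => rfl
  inv_mul_cancel f := Homeomorph.ext fun x => f.symm_apply_apply x

/-- The word length of `g` with respect to `S`: the minimal number of factors in a
decomposition of `g` as a product of elements of `S ∪ S⁻¹`. -/
noncomputable def wordLength {G : Type*} [Group G] (S : Set G) (g : G) : ℕ :=
  sInf {n | ∃ l : List G, l.length = n ∧ (∀ x ∈ l, x ∈ S ∨ x⁻¹ ∈ S) ∧ l.prod = g}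

/-- `g` is a distortion element of the subgroup of `G` whose carrier is the subset `H`. -/
def IsDistortionElementIn {G : Type*} [Group G] (H : Set G) (g : G) : Prop :=
  ∃ S : Finset G, (S : Set G) ⊆ H ∧ g ∈ Subgroup.closure (S : Set G) ∧
    Tendsto (fun n : ℕ => (wordLength (S : Set G) (g ^ n) : ℝ) / n) atTop (nhds 0)

/-- The rotation `R_α : (θ, t) ↦ (θ + α, t)` of the closed annulus. -/
noncomputable def rotationA (α : AddCircle (1 : ℝ)) : Annulus ≃ₜ Annulus :=
  (Homeomorph.addLeft α).prodCongr (Homeomorph.refl unitInterval)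


namespace RotDist

/-! ### Words -/

/-- `g` is a word of length `n` in `S`. -/
def HasWord {G : Type*} [Group G] (S : Set G) (n : ℕ) (g : G) : Prop :=
  ∃ l : List G, l.length = n ∧ (∀ x ∈ l, x ∈ S ∨ x⁻¹ ∈ S) ∧ l.prod = g

section words
variable {G : Type*} [Group G] {S : Set G}

theorem HasWord.one : HasWord S 0 (1 : G) := ⟨[], by simp⟩

theorem HasWord.of_mem {g : G} (h : g ∈ S) : HasWord S 1 g := ⟨[g], by simp [h]⟩

theorem HasWord.mul {m n : ℕ} {g h : G} (hg : HasWord S m g) (hh : HasWord S n h) :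
    HasWord S (m + n) (g * h) := by
  obtain ⟨l, rfl, h1, rfl⟩ := hg
  obtain ⟨l', rfl, h2, rfl⟩ := hh
  refine ⟨l ++ l', by simp, ?_, by simp⟩
  intro x hx
  rcases List.mem_append.1 hx with h | h
  · exact h1 x h
  · exact h2 x h

theorem HasWord.inv {m : ℕ} {g : G} (hg : HasWord S m g) : HasWord S m g⁻¹ := by
  obtain ⟨l, rfl, h1, rfl⟩ := hg
  refine ⟨(l.map (·⁻¹)).reverse, by simp, ?_, by rw [List.prod_inv_reverse]⟩
  intro x hx
  simp only [List.mem_reverse, List.mem_map] at hx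
  obtain ⟨y, hy, rfl⟩ := hx
  rw [inv_inv]
  exact (h1 y hy).symm

theorem HasWord.pow {g : G} (hg : HasWord S 1 g) (n : ℕ) : HasWord S n (g ^ n) := by
  induction n with
  | zero => simpa using HasWord.one
  | succ n ih => rw [pow_succ]; exact ih.mul hg

theorem HasWord.le {n : ℕ} {g : G} (h : HasWord S n g) : wordLength S g ≤ n := Nat.sInf_le h

theorem HasWord.wl {n : ℕ} {g : G} (h : HasWord S n g) : HasWord S (wordLength S g) g :=
  Nat.sInf_mem (s := {n | HasWord S n g}) ⟨n, h⟩

theorem HasWord.map {G' : Type*} [Group G'] {S' : Set G'} (φ : G →* G')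
    (hS : ∀ x ∈ S, φ x ∈ S') {n : ℕ} {g : G} (h : HasWord S n g) : HasWord S' n (φ g) := by
  obtain ⟨l, rfl, h1, rfl⟩ := h
  refine ⟨l.map φ, by simp, ?_, by rw [map_list_prod]⟩
  intro x hx
  obtain ⟨y, hy, rfl⟩ := List.mem_map.1 hx
  rcases h1 y hy with h | h
  · exact Or.inl (hS _ h)
  · right; rw [← map_inv]; exact hS _ h

/-- Criterion for distortion via Fekete. -/
theorem tendsto_of_words (g : G) (hg : g ∈ S)
    (H : ∀ k : ℕ, ∃ n : ℕ, (k + 1) ^ 2 ≤ n ∧ HasWord S (8 * k + 14) (g ^ n)) :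
    Tendsto (fun n : ℕ => (wordLength S (g ^ n) : ℝ) / n) atTop (nhds 0) := by
  have hw : ∀ n, HasWord S n (g ^ n) := fun n => (HasWord.of_mem hg).pow n
  have hsub : Subadditive (fun n : ℕ => (wordLength S (g ^ n) : ℝ)) := by
    intro m n
    have := ((hw m).wl.mul (hw n).wl).le
    rw [← pow_add] at this
    beta_reduce
    exact_mod_cast this
  have hb : BddBelow (range fun n : ℕ => (wordLength S (g ^ n) : ℝ) / n) :=
    ⟨0, by rintro _ ⟨n, rfl⟩; positivity⟩
  have ht := hsub.tendsto_lim hb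
  have h0 : 0 ≤ hsub.lim := ge_of_tendsto' ht (fun n => by positivity)
  have h1 : ∀ k : ℕ, hsub.lim ≤ 14 * (1 / ((k : ℝ) + 1)) := by
    intro k
    obtain ⟨n, hn, hwd⟩ := H k
    have hn0 : n ≠ 0 := by
      rintro rfl
      have : 0 < (k + 1) ^ 2 := by positivity
      omega
    refine (hsub.lim_le_div hb hn0).trans ?_
    have h2 : (wordLength S (g ^ n) : ℝ) ≤ 8 * k + 14 := by exact_mod_cast hwd.le
    have h3 : ((k : ℝ) + 1) ^ 2 ≤ n := by exact_mod_cast hn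
    have hk : (0 : ℝ) ≤ k := k.cast_nonneg
    have hnp : (0 : ℝ) < n := by positivity
    rw [mul_one_div, div_le_div_iff₀ hnp (by positivity)]
    nlinarith
  have h2 : hsub.lim ≤ 14 * 0 :=
    ge_of_tendsto' (tendsto_one_div_add_atTop_nhds_zero_nat.const_mul 14) h1
  have : hsub.lim = 0 := by linarith
  rwa [this] at ht
end words

/-! ### Gluing -/

abbrev Q := ℝ ≃o ℝ

noncomputable def ee (x : ℝ) : ℝ := (1 + (orderIsoIooNegOneOne ℝ x : ℝ)) / 2

theorem ee_eq (x : ℝ) : ee x = (1 + x / (1 + |x|)) / 2 := by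
  unfold ee orderIsoIooNegOneOne
  rfl

theorem ee_lt {x y : ℝ} : ee x < ee y ↔ x < y := by
  unfold ee
  have := (orderIsoIooNegOneOne ℝ).lt_iff_lt (x := x) (y := y)
  rw [← this, ← Subtype.coe_lt_coe]
  constructor <;> intro h <;> linarith

theorem ee_mono : StrictMono ee := fun _ _ h => ee_lt.2 h

theorem ee_pos (x : ℝ) : 0 < ee x := by
  have := (orderIsoIooNegOneOne ℝ x).2.1
  unfold ee; linarith

theorem ee_lt_one (x : ℝ) : ee x < 1 := by
  have := (orderIsoIooNegOneOne ℝ x).2.2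
  unfold ee; linarith

theorem ee_surj {y : ℝ} (h0 : 0 < y) (h1 : y < 1) : ∃ x, ee x = y := by
  refine ⟨(orderIsoIooNegOneOne ℝ).symm ⟨2 * y - 1, by constructor <;> linarith⟩, ?_⟩
  unfold ee
  rw [OrderIso.apply_symm_apply]
  simp

noncomputable def ei : ℝ → ℝ := Function.invFun ee

theorem ei_ee (x : ℝ) : ei (ee x) = x := Function.leftInverse_invFun ee_mono.injective x

theorem cases_real (x : ℝ) : ∃ n : ℤ, x = n ∨ ∃ t, x = n + ee t := by
  refine ⟨⌊x⌋, ?_⟩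
  rcases (Int.fract_nonneg x).eq_or_lt with h | h
  · left; have := Int.floor_add_fract x; linarith
  · right
    obtain ⟨t, ht⟩ := ee_surj h (Int.fract_lt_one x)
    exact ⟨t, by rw [ht, Int.floor_add_fract]⟩

noncomputable def glf (w : ℤ → Q) (x : ℝ) : ℝ :=
  if Int.fract x = 0 then x else ⌊x⌋ + ee (w ⌊x⌋ (ei (Int.fract x)))

theorem glf_int (w : ℤ → Q) (n : ℤ) : glf w n = n := by simp [glf]

theorem floor_ee (n : ℤ) (t : ℝ) : ⌊(n : ℝ) + ee t⌋ = n := by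
  rw [Int.floor_eq_iff]
  have := ee_pos t
  have := ee_lt_one t
  constructor <;> linarith

theorem fract_ee (n : ℤ) (t : ℝ) : Int.fract ((n : ℝ) + ee t) = ee t := by
  rw [Int.fract, floor_ee]; ring

theorem glf_ee (w : ℤ → Q) (n : ℤ) (t : ℝ) : glf w (n + ee t) = n + ee (w n t) := by
  rw [glf, fract_ee, floor_ee, if_neg (ee_pos t).ne', ei_ee]

theorem glf_mul (v w : ℤ → Q) (x : ℝ) : glf (v * w) x = glf v (glf w x) := by
  obtain ⟨n, rfl | ⟨t, rfl⟩⟩ := cases_real x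
  · simp [glf_int]
  · simp [glf_ee]

theorem glf_one (x : ℝ) : glf 1 x = x := by
  obtain ⟨n, rfl | ⟨t, rfl⟩⟩ := cases_real x
  · simp [glf_int]
  · simp [glf_ee]

theorem floor_glf (w : ℤ → Q) (x : ℝ) : ⌊glf w x⌋ = ⌊x⌋ := by
  obtain ⟨n, rfl | ⟨t, rfl⟩⟩ := cases_real x
  · simp [glf_int]
  · rw [glf_ee, floor_ee, floor_ee]

theorem glf_mono (w : ℤ → Q) : StrictMono (glf w) := by
  intro x y hxy
  rcases (Int.floor_mono hxy.le).eq_or_lt with h | h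
  · obtain ⟨n, rfl | ⟨t, rfl⟩⟩ := cases_real x <;>
    obtain ⟨m, rfl | ⟨s, rfl⟩⟩ := cases_real y
    · simpa [glf_int] using hxy
    · simp only [floor_ee, Int.floor_intCast] at h
      subst h
      rw [glf_int, glf_ee]
      have := ee_pos (w n s)
      linarith
    · simp only [floor_ee, Int.floor_intCast] at h
      subst h
      have := ee_pos t
      linarith
    · simp only [floor_ee] at h
      subst h
      rw [glf_ee, glf_ee]
      have : ee t < ee s := by linarith
      have : ee (w n t) < ee (w n s) := ee_lt.2 ((w n).strictMono (ee_lt.1 this))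
      linarith
  · rw [← floor_glf w x, ← floor_glf w y] at h
    by_contra hc
    exact absurd (Int.floor_mono (not_lt.1 hc)) (not_le.2 h)

noncomputable def glo (w : ℤ → Q) : Q where
  toFun := glf w
  invFun := glf w⁻¹
  left_inv x := by rw [← glf_mul, inv_mul_cancel, glf_one]
  right_inv x := by rw [← glf_mul, mul_inv_cancel, glf_one]
  map_rel_iff' := (glf_mono w).le_iff_le

noncomputable def gl : (ℤ → Q) →* Q where
  toFun := glo
  map_one' := OrderIso.ext (funext glf_one)
  map_mul' v w := OrderIso.ext (funext (glf_mul v w))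

theorem gl_int (w : ℤ → Q) (n : ℤ) : gl w n = n := glf_int w n
theorem gl_ee (w : ℤ → Q) (n : ℤ) (t : ℝ) : gl w (n + ee t) = n + ee (w n t) := glf_ee w n t

theorem eq_gl {f : Q} {w : ℤ → Q} (h0 : ∀ n : ℤ, f n = n)
    (h1 : ∀ (n : ℤ) t, f (n + ee t) = n + ee (w n t)) : f = gl w := by
  refine OrderIso.ext (funext fun x => ?_)
  obtain ⟨n, rfl | ⟨t, rfl⟩⟩ := cases_real x
  · rw [h0, gl_int]
  · rw [h1, gl_ee]

/-- Every `f` fixing the integers is a gluing. -/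
theorem exists_gl {f : Q} (h0 : ∀ n : ℤ, f n = n) : ∃ w, f = gl w := by
  have key : ∀ (f : Q), (∀ n : ℤ, f n = n) → ∀ (n : ℤ) t, ∃ s, f (n + ee t) = n + ee s := by
    intro f h0 n t
    have h1 : f n < f (n + ee t) := f.strictMono (by linarith [ee_pos t])
    have h2 : f (n + ee t) < f ((n + 1 : ℤ)) :=
      f.strictMono (by push_cast; linarith [ee_lt_one t])
    rw [h0] at h1 h2
    push_cast at h2
    obtain ⟨s, hs⟩ := ee_surj (y := f (n + ee t) - n) (by linarith) (by linarith)
    exact ⟨s, by rw [hs]; ring⟩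
  have h0' : ∀ n : ℤ, f.symm n = n := fun n => by rw [OrderIso.symm_apply_eq, h0]
  choose a ha using key f h0
  choose b hb using key f.symm h0'
  refine ⟨fun n => ⟨⟨a n, b n, fun t => ?_, fun t => ?_⟩, ?_⟩, eq_gl h0 ha⟩
  · apply ee_mono.injective
    have := hb n (a n t)
    rw [← ha, OrderIso.symm_apply_apply] at this
    linarith
  · apply ee_mono.injective
    have := ha n (b n t)
    rw [← hb, OrderIso.apply_symm_apply] at this
    linarith
  · intro s t
    change a n s ≤ a n t ↔ s ≤ t
    rw [← ee_mono.le_iff_le, ← ee_mono.le_iff_le (a := s), ← add_le_add_iff_left (n : ℝ), ← ha,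
      ← ha, f.le_iff_le, add_le_add_iff_left]

/-- extension by the identity from `(0,1)`. -/
noncomputable def D : Q →* Q := gl.comp (MonoidHom.mulSingle (fun _ : ℤ => Q) 0)
/-- periodic extension from `(0,1)`. -/
noncomputable def P : Q →* Q := gl.comp (Pi.constMonoidHom ℤ Q)

theorem D_apply (v : Q) : D v = gl (Pi.mulSingle 0 v) := rfl
theorem P_apply (v : Q) : P v = gl (fun _ => v) := rfl

theorem exists_D {f : Q} (h : ∀ x, x ≤ 0 ∨ 1 ≤ x → f x = x) : ∃ v, f = D v := by
  have hn : ∀ n : ℤ, f n = n := by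
    intro n
    apply h
    rcases le_or_gt n 0 with h | h
    · left; exact_mod_cast h
    · right; exact_mod_cast h
  obtain ⟨w, rfl⟩ := exists_gl hn
  refine ⟨w 0, ?_⟩
  rw [D_apply]
  apply eq_gl hn
  intro n t
  rw [gl_ee]
  rcases eq_or_ne n 0 with rfl | h0
  · simp
  · rw [Pi.mulSingle_eq_of_ne h0, ← gl_ee]
    apply h
    have := ee_pos t
    have := ee_lt_one t
    rcases lt_or_gt_of_ne h0 with h1 | h1
    · left
      have : (n : ℝ) ≤ -1 := by exact_mod_cast (by omega : n ≤ -1)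
      linarith
    · right
      have : (1 : ℝ) ≤ n := by exact_mod_cast h1
      linarith

theorem exists_P {f : Q} (h0 : f 0 = 0) (h : ∀ x, f (x + 1) = f x + 1) : ∃ v, f = P v := by
  have hz : ∀ (n : ℤ) x, f (x + n) = f x + n := by
    intro n
    induction n using Int.induction_on with
    | zero => simp
    | succ i ih => intro x; push_cast at ih ⊢; rw [← add_assoc, h, ih]; ring
    | pred i ih =>
      intro x
      have := h (x + ((-(i:ℤ) - 1 : ℤ) : ℝ))
      rw [add_assoc, show (((-(i:ℤ) - 1 : ℤ) : ℝ)) + 1 = ((-(i:ℤ) : ℤ) : ℝ) by push_cast; ring,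
        ih] at this
      push_cast at this ⊢
      linarith
  have hn : ∀ n : ℤ, f n = n := by
    intro n
    have := hz n 0
    rw [h0] at this
    simpa using this
  obtain ⟨w, rfl⟩ := exists_gl hn
  refine ⟨w 0, ?_⟩
  rw [P_apply]
  apply eq_gl hn
  intro n t
  have := gl_ee w 0 t
  rw [add_comm, hz, add_comm]
  simpa using this

/-- translations -/
noncomputable def tr (a : ℝ) : Q := OrderIso.addRight a

@[simp] theorem tr_apply (a x : ℝ) : tr a x = x + a := rfl
theorem tr_inv (a : ℝ) : (tr a)⁻¹ = tr (-a) := by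
  rw [inv_eq_iff_mul_eq_one]
  ext x; simp
theorem tr_pow (a : ℝ) (n : ℕ) : tr a ^ n = tr (n * a) := by
  induction n with
  | zero => ext x; simp
  | succ n ih => rw [pow_succ, ih]; ext x; simp; ring

theorem tr_conj_gl (k : ℤ) (w : ℤ → Q) : (tr k)⁻¹ * gl w * tr k = gl (fun n => w (n + k)) := by
  rw [tr_inv]
  apply eq_gl
  · intro n
    have := gl_int w (n + k)
    push_cast at this
    simp [this]
  · intro n t
    have := gl_ee w (n + k) t
    push_cast at this
    have h2 : (n : ℝ) + ee t + k = n + k + ee t := by ring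
    simp only [RelIso.mul_apply, tr_apply, h2, this]
    ring

theorem P_periodic (v : Q) (x : ℝ) : P v (x + 1) = P v x + 1 := by
  have := tr_conj_gl 1 (fun _ => v)
  rw [mul_assoc, inv_mul_eq_iff_eq_mul] at this
  simpa [P_apply] using congrArg (fun f : Q => f x) this

noncomputable def xs (v : Q) : Q := gl (fun n => if 0 ≤ n then v else 1)

open scoped commutatorElement in
theorem comm_xs (v : Q) : ⁅xs v, tr 1⁆ = D v := by
  have h := tr_conj_gl (-1) (fun n => if 0 ≤ n then v else 1)
  have h' : tr 1 * xs v * (tr 1)⁻¹ = gl (fun n => if 0 ≤ n + (-1) then v else 1) := by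
    rw [← h, xs, tr_inv, tr_inv]; simp
  have : ⁅xs v, tr 1⁆ = xs v * (tr 1 * xs v * (tr 1)⁻¹)⁻¹ := by
    rw [commutatorElement_def]; group
  rw [this, h', xs, D_apply, ← map_inv, ← map_mul]
  congr 1
  funext n
  rcases lt_trichotomy n 0 with h | rfl | h
  · have h1 : ¬ (0 ≤ n) := by omega
    have h2 : ¬ (1 ≤ n) := by omega
    simp [h1, h2, h.ne]
  · simp
  · have h1 : (0 ≤ n) := by omega
    have h2 : (1 ≤ n) := by omega
    simp [h1, h2, h.ne']

noncomputable def us (v : ℕ → Q) : Q := gl (fun n => xs (v n.toNat))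

open scoped commutatorElement in
theorem comm_us (v : ℕ → Q) (k : ℕ) :
    ⁅(tr 1 ^ k)⁻¹ * us v * tr 1 ^ k, D (tr 1)⁆ = D (D (v k)) := by
  have h := tr_conj_gl k (fun n => xs (v n.toNat))
  rw [tr_pow, us, mul_one]
  rw [Int.cast_natCast] at h
  rw [h, D_apply, ← map_commutatorElement, D_apply]
  congr 1
  funext n
  rw [← comm_xs]
  rcases eq_or_ne n 0 with rfl | h0
  · simp [commutatorElement_def]
  · simp [commutatorElement_def, h0]

theorem word_DD {S : Set Q} (v : ℕ → Q) (k : ℕ) (h1 : tr 1 ∈ S) (h2 : D (tr 1) ∈ S)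
    (h3 : us v ∈ S) : HasWord S (4 * k + 4) (D (D (v k))) := by
  have a := (HasWord.of_mem h1).pow k
  have b := (a.inv.mul (HasWord.of_mem h3)).mul a
  have c := HasWord.of_mem h2
  have := ((b.mul c).mul b.inv).mul c.inv
  rw [← comm_us, commutatorElement_def]
  convert this using 1
  ring

/-- affine map -/
noncomputable def aff : Q where
  toFun x := 24 * x - 15
  invFun y := (y + 15) / 24
  left_inv x := by ring
  right_inv x := by ring
  map_rel_iff' := by intro a b; simp

theorem exists_PDD {f : Q} (h : ∀ x, f (x + 1) = f x + 1) (h0 : ∀ x, |x| ≤ 1 / 8 → f x = x) :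
    ∃ v, f = P (aff * D (D v) * aff⁻¹) := by
  obtain ⟨u, rfl⟩ := exists_P (h0 0 (by norm_num)) h
  have em3 : ee (-3) = 1 / 8 := by rw [ee_eq]; norm_num
  have e3 : ee 3 = 7 / 8 := by rw [ee_eq]; norm_num
  have e0 : ee 0 = 1 / 2 := by rw [ee_eq]; norm_num
  have e1 : ee 1 = 3 / 4 := by rw [ee_eq]; norm_num
  have hu : ∀ t, t ≤ -3 ∨ 3 ≤ t → u t = t := by
    intro t ht
    have h1 : P u (ee t) = ee (u t) := by
      rw [P_apply]
      simpa using gl_ee (fun _ => u) 0 t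
    have h2 : P u (ee t) = ee t := by
      have := ee_pos t
      have := ee_lt_one t
      rcases ht with ht | ht
      · have := ee_mono.monotone ht
        exact h0 _ (abs_le.2 ⟨by linarith, by linarith⟩)
      · have := ee_mono.monotone ht
        have h3 := h0 (ee t - 1) (abs_le.2 ⟨by linarith, by linarith⟩)
        have h4 := h (ee t - 1)
        rw [h3, sub_add_cancel] at h4
        exact h4
    exact ee_mono.injective (h1.symm.trans h2)
  have hc : ∀ x, x ≤ 1 / 2 ∨ 3 / 4 ≤ x → (aff⁻¹ * u * aff) x = x := by
    intro x hx
    have : u (aff x) = aff x := by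
      apply hu
      change 24 * x - 15 ≤ -3 ∨ 3 ≤ 24 * x - 15
      rcases hx with hx | hx
      · left; linarith
      · right; linarith
    rw [RelIso.mul_apply, RelIso.mul_apply, this, RelIso.inv_apply_self]
  obtain ⟨u', hu'⟩ := exists_D (f := aff⁻¹ * u * aff) (by
    intro x hx
    apply hc
    rcases hx with hx | hx
    · left; linarith
    · right; linarith)
  obtain ⟨v, rfl⟩ := exists_D (f := u') (by
    intro t ht
    rw [hu'] at hc
    have h1 : D u' (ee t) = ee (u' t) := by
      rw [D_apply]
      simpa using gl_ee (Pi.mulSingle 0 u') 0 t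
    have h2 : D u' (ee t) = ee t := by
      apply hc
      rcases ht with ht | ht
      · have := ee_mono.monotone ht
        left; linarith
      · have := ee_mono.monotone ht
        right; linarith
    exact ee_mono.injective (h1.symm.trans h2))
  refine ⟨v, ?_⟩
  rw [← hu']
  congr 1
  group

/-! ### From the line to the annulus -/

/-- Lifts of degree one circle homeomorphisms. -/
def C : Subgroup Q where
  carrier := {f | ∀ x, f (x + 1) = f x + 1}
  mul_mem' {f g} hf hg x := by
    change f (g (x + 1)) = f (g x) + 1
    rw [hg, hf]
  one_mem' x := rfl
  inv_mem' {f} hf x := by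
    apply f.injective
    rw [hf, RelIso.apply_inv_self, RelIso.apply_inv_self]

theorem disp_periodic (f : C) : Function.Periodic (fun x : ℝ => f.1 x - x) 1 := by
  intro x
  have := f.2 x
  simp only [this]
  ring

/-- displacement -/
noncomputable def disp (f : C) : AddCircle (1 : ℝ) → ℝ := (disp_periodic f).lift

theorem disp_coe (f : C) (x : ℝ) : disp f (x : AddCircle (1 : ℝ)) = f.1 x - x :=
  (disp_periodic f).lift_coe x

theorem continuous_disp (f : C) : Continuous (disp f) := by
  refine Continuous.quotient_liftOn' ?_ _
  exact f.1.continuous.sub continuous_id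

/-- action on the annulus -/
noncomputable def act (f : C) (p : Annulus) : Annulus :=
  (p.1 + ((disp f p.1 : ℝ) : AddCircle (1 : ℝ)), p.2)

theorem act_coe (f : C) (x : ℝ) (t : unitInterval) :
    act f ((x : AddCircle (1 : ℝ)), t) = (((f.1 x : ℝ) : AddCircle (1 : ℝ)), t) := by
  rw [act, disp_coe, ← AddCircle.coe_add, add_sub_cancel]

theorem act_mul (f g : C) (p : Annulus) : act (f * g) p = act f (act g p) := by
  obtain ⟨θ, t⟩ := p
  obtain ⟨x, rfl⟩ := QuotientAddGroup.mk_surjective θ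
  have h1 := act_coe (f * g) x t
  have h2 := act_coe g x t
  have h3 := act_coe f (g.1 x) t
  exact h1.trans (h3.symm.trans (congrArg (act f) h2.symm))

theorem act_one (p : Annulus) : act 1 p = p := by
  obtain ⟨θ, t⟩ := p
  obtain ⟨x, rfl⟩ := QuotientAddGroup.mk_surjective θ
  erw [act_coe]
  rfl

theorem continuous_act (f : C) : Continuous (act f) := by
  unfold act
  have h := continuous_disp f
  have h2 := AddCircle.continuous_mk' (1 : ℝ)
  exact (continuous_fst.add (h2.comp (h.comp continuous_fst))).prodMk continuous_snd

noncomputable def actH (f : C) : Annulus ≃ₜ Annulus where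
  toFun := act f
  invFun := act f⁻¹
  left_inv p := by rw [← act_mul, inv_mul_cancel, act_one]
  right_inv p := by rw [← act_mul, mul_inv_cancel, act_one]
  continuous_toFun := continuous_act f
  continuous_invFun := continuous_act f⁻¹

noncomputable def Phi : C →* (Annulus ≃ₜ Annulus) where
  toFun := actH
  map_one' := Homeomorph.ext act_one
  map_mul' f g := Homeomorph.ext (act_mul f g)

/-- order isomorphism from a strictly monotone continuous map at bounded distance from `id` -/
theorem exists_orderIso {h : ℝ → ℝ} (hm : StrictMono h) (hc : Continuous h)
    (hp : ∀ x, h (x + 1) = h x + 1) : ∃ f : C, ∀ x, f.1 x = h x := by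
  have hn : ∀ n : ℕ, h n = h 0 + n ∧ h (-n) = h 0 - n := by
    intro n
    induction n with
    | zero => simp
    | succ n ih =>
      refine ⟨by push_cast; rw [hp, ih.1]; ring, ?_⟩
      have := hp (-((n + 1 : ℕ) : ℝ))
      rw [show -((n + 1 : ℕ) : ℝ) + 1 = -(n : ℝ) by push_cast; ring, ih.2] at this
      push_cast at this ⊢
      linarith
  have hs : Function.Surjective h := by
    intro y
    obtain ⟨n, hny⟩ := exists_nat_ge |y - h 0|
    obtain ⟨h1, h2⟩ := abs_le.1 hny
    have := intermediate_value_Icc (a := -(n : ℝ)) (b := n)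
      (by have : (0 : ℝ) ≤ n := n.cast_nonneg
          linarith) hc.continuousOn
    obtain ⟨x, -, hx⟩ := this (show y ∈ Icc _ _ by
      rw [(hn n).1, (hn n).2]; constructor <;> linarith)
    exact ⟨x, hx⟩
  exact ⟨⟨hm.orderIsoOfSurjective h hs, hp⟩, fun x => rfl⟩

theorem isotopic (f : C) : IsotopicToId (Phi f) := by
  have key : ∀ s : unitInterval, ∃ g : C, ∀ x, g.1 x = (1 - (s : ℝ)) * x + s * f.1 x := by
    intro s
    have hs0 : (0 : ℝ) ≤ s := s.2.1
    have hs1 : (s : ℝ) ≤ 1 := s.2.2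
    apply exists_orderIso
    · intro x y hxy
      have hf := f.1.strictMono hxy
      rcases hs0.eq_or_lt with h | h
      · simp only [← h]; linarith
      · have h1 : (1 - (s : ℝ)) * x ≤ (1 - (s : ℝ)) * y :=
          mul_le_mul_of_nonneg_left hxy.le (by linarith)
        have h2 : (s : ℝ) * f.1 x < s * f.1 y := mul_lt_mul_of_pos_left hf h
        exact add_lt_add_of_le_of_lt h1 h2
    · have := f.1.continuous
      fun_prop
    · intro x
      rw [show f.1 (x + 1) = f.1 x + 1 from f.2 x]
      ring
  choose g hg using key
  have hd : ∀ s θ, disp (g s) θ = s * disp f θ := by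
    intro s θ
    obtain ⟨x, rfl⟩ := QuotientAddGroup.mk_surjective θ
    erw [disp_coe, disp_coe]
    rw [hg]
    ring
  refine ⟨fun s => Phi (g s), ?_, ?_, ?_⟩
  · change Continuous fun p : unitInterval × Annulus =>
      ((p.2.1 + ((disp (g p.1) p.2.1 : ℝ) : AddCircle (1 : ℝ)), p.2.2) : Annulus)
    simp only [hd]
    have h := continuous_disp f
    have h2 := AddCircle.continuous_mk' (1 : ℝ)
    refine Continuous.prodMk (Continuous.add (by fun_prop) (h2.comp ?_)) (by fun_prop)
    fun_prop
  · have : g 0 = 1 := by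
      ext x
      rw [hg]
      simp
    change Phi (g 0) = _
    rw [this, map_one]
    rfl
  · have : g 1 = f := by
      ext x
      rw [hg]
      simp
    change Phi (g 1) = _
    rw [this]

/-- translations in `C` -/
noncomputable def trC (a : ℝ) : C := ⟨tr a, fun x => by simp only [tr_apply]; ring⟩

theorem Phi_trC (a : ℝ) : Phi (trC a) = rotationA (a : AddCircle (1 : ℝ)) := by
  refine Homeomorph.ext fun p => ?_
  obtain ⟨θ, t⟩ := p
  obtain ⟨x, rfl⟩ := QuotientAddGroup.mk_surjective θ
  refine (act_coe (trC a) x t).trans ?_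
  change (((x + a : ℝ) : AddCircle (1 : ℝ)), t) = ((a : AddCircle (1 : ℝ)) + (x : AddCircle (1 : ℝ)), t)
  rw [add_comm x, AddCircle.coe_add]

theorem rotation_pow (α : ℝ) (n : ℕ) (m : ℤ) :
    rotationA (α : AddCircle (1 : ℝ)) ^ n = Phi (trC (n * α - m)) := by
  rw [← Phi_trC, ← map_pow]
  have : trC α ^ n = trC (n * α) := by
    apply Subtype.ext
    exact tr_pow α n
  rw [this, Phi_trC, Phi_trC]
  congr 1
  rw [AddCircle.coe_sub]
  have : ((m : ℝ) : AddCircle (1 : ℝ)) = 0 := by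
    rw [AddCircle.coe_eq_zero_iff]
    exact ⟨m, by simp⟩
  rw [this, sub_zero]

/-- the periodic extension as a map to `C`. -/
noncomputable def PC : Q →* C := P.codRestrict C P_periodic

/-! ### Decomposition of small translations -/

theorem exists_bump {ε : ℝ} (hε : |ε| ≤ 1 / 9) : ∃ h : C,
    (∀ x : ℝ, ‖(x : AddCircle (1 : ℝ))‖ ≤ 1 / 8 → h.1 x = x) ∧
    (∀ x : ℝ, 1 / 4 ≤ ‖(x : AddCircle (1 : ℝ))‖ → h.1 x = x + ε) := by
  set N : ℝ → ℝ := fun x => ‖(x : AddCircle (1 : ℝ))‖ with hN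
  have hlip : ∀ x y : ℝ, |N y - N x| ≤ |y - x| := by
    intro x y
    refine (abs_norm_sub_norm_le _ _).trans ?_
    rw [← AddCircle.coe_sub]
    exact QuotientAddGroup.norm_mk_le_norm
  have hNc : Continuous N := continuous_norm.comp (AddCircle.continuous_mk' (1 : ℝ))
  have hNp : ∀ x, N (x + 1) = N x := by
    intro x
    simp only [hN]
    rw [AddCircle.coe_add_period]
  obtain ⟨f, hf⟩ := exists_orderIso (h := fun x => x + ε * max 0 (min 1 (8 * N x - 1))) (by
    intro x y hxy
    have h1 : |max 0 (min 1 (8 * N y - 1)) - max 0 (min 1 (8 * N x - 1))| ≤ 8 * (y - x) := by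
      have h2 := hlip x y
      rw [abs_of_pos (sub_pos.2 hxy)] at h2
      have h3 := abs_max_sub_max_le_abs (min 1 (8 * N y - 1)) (min 1 (8 * N x - 1)) 0
      have h4 := abs_min_sub_min_le_max 1 (8 * N y - 1) 1 (8 * N x - 1)
      have h5 : |8 * N y - 1 - (8 * N x - 1)| = 8 * |N y - N x| := by
        rw [show 8 * N y - 1 - (8 * N x - 1) = 8 * (N y - N x) by ring, abs_mul]; norm_num
      rw [h5, sub_self, abs_zero, max_eq_right (by positivity)] at h4
      rw [max_comm 0, max_comm 0]
      linarith
    have h6 : |ε * (max 0 (min 1 (8 * N y - 1)) - max 0 (min 1 (8 * N x - 1)))|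
        ≤ 1 / 9 * (8 * (y - x)) := by
      rw [abs_mul]
      exact mul_le_mul hε h1 (abs_nonneg _) (by norm_num)
    have h7 := (abs_le.1 h6).1
    simp only
    nlinarith) (by fun_prop) (by intro x; simp only [hNp]; ring)
  refine ⟨f, fun x hx => ?_, fun x hx => ?_⟩
  · change N x ≤ 1 / 8 at hx
    rw [hf, max_eq_left]
    · ring
    · exact (min_le_right _ _).trans (by linarith)
  · change 1 / 4 ≤ N x at hx
    rw [hf, min_eq_left (by linarith), max_eq_right (by norm_num)]
    ring

theorem norm_half {x : ℝ} {a : ℝ} (hx : |x - 1 / 2| ≤ a) : 1 / 2 - a ≤ ‖(x : AddCircle (1 : ℝ))‖ := by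
  have h1 : ‖((x - 1 / 2 : ℝ) : AddCircle (1 : ℝ))‖ ≤ |x - 1 / 2| :=
    QuotientAddGroup.norm_mk_le_norm
  have h2 : ‖((1 / 2 : ℝ) : AddCircle (1 : ℝ))‖ = 1 / 2 := by
    have := AddCircle.norm_half_period_eq (1 : ℝ)
    simpa using this
  have h3 := norm_sub_norm_le ((1 / 2 : ℝ) : AddCircle (1 : ℝ)) (x : AddCircle (1 : ℝ))
  rw [← norm_neg (_ - _), neg_sub, ← AddCircle.coe_sub, h2] at h3
  linarith

theorem decomp {ε : ℝ} (hε : |ε| ≤ 1 / 9) : ∃ v v' : Q,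
    trC ε = (trC (1 / 2))⁻¹ * PC (aff * D (D v) * aff⁻¹) * trC (1 / 2) *
      PC (aff * D (D v') * aff⁻¹) := by
  obtain ⟨h, h0, h1⟩ := exists_bump hε
  set g : C := trC (1 / 2) * (trC ε * h⁻¹) * (trC (1 / 2))⁻¹ with hg
  have hgx : ∀ x : ℝ, |x| ≤ 1 / 8 → g.1 x = x := by
    intro x hx
    have h2 : h.1 (x - 1 / 2 - ε) = x - 1 / 2 := by
      have h3 : |(x - 1 / 2 - ε + 1) - 1 / 2| ≤ 1 / 4 := by
        obtain ⟨a, b⟩ := abs_le.1 hx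
        obtain ⟨c, d⟩ := abs_le.1 hε
        exact abs_le.2 ⟨by linarith, by linarith⟩
      have h4 := norm_half h3
      rw [AddCircle.coe_add_period] at h4
      rw [h1 _ (by linarith)]
      ring
    have h5 : (h.1)⁻¹ (x - 1 / 2) = x - 1 / 2 - ε := by
      rw [← h2, RelIso.inv_apply_self, h2]
    have h6 : (tr (1 / 2))⁻¹ x = x - 1 / 2 := by rw [tr_inv, tr_apply]; ring
    change tr (1 / 2) (tr ε ((h.1)⁻¹ ((tr (1 / 2))⁻¹ x))) = x
    rw [h6, h5, tr_apply, tr_apply]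
    ring
  obtain ⟨v, hv⟩ := exists_PDD (f := g.1) g.2 hgx
  obtain ⟨v', hv'⟩ := exists_PDD (f := h.1) h.2
    (fun x hx => h0 x (le_trans QuotientAddGroup.norm_mk_le_norm hx))
  have e1 : PC (aff * D (D v) * aff⁻¹) = g := Subtype.ext hv.symm
  have e2 : PC (aff * D (D v') * aff⁻¹) = h := Subtype.ext hv'.symm
  refine ⟨v, v', ?_⟩
  rw [e1, e2, hg]
  group

theorem exists_times (α : ℝ) (k : ℕ) :
    ∃ (n : ℕ) (m : ℤ), (k + 1) ^ 2 ≤ n ∧ |(n : ℝ) * α - m| ≤ 1 / 9 := by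
  obtain ⟨j, hj, -, h⟩ := Real.exists_nat_abs_mul_sub_round_le (((k + 1) ^ 2 : ℕ) * α)
    (n := 8) (by norm_num)
  refine ⟨j * (k + 1) ^ 2, round ((j : ℝ) * (((k + 1) ^ 2 : ℕ) * α)),
    Nat.le_mul_of_pos_left _ hj, ?_⟩
  · rw [Nat.cast_mul, mul_assoc]
    refine h.trans ?_
    norm_num

end RotDist

open RotDist in
/-- **Every rotation of the closed annulus is a distortion element of `Homeo₀(𝔸)`.** -/
theorem rotationA_isDistortionElement (α : AddCircle (1 : ℝ)) :
    IsDistortionElementIn {h : Annulus ≃ₜ Annulus | IsotopicToId h} (rotationA α) := by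
  classical
  obtain ⟨α, rfl⟩ := QuotientAddGroup.mk_surjective α
  change IsDistortionElementIn _ (rotationA (α : AddCircle (1 : ℝ)))
  choose n m hn hm using exists_times α
  choose v v' hv using fun k => decomp (hm k)
  let SQ : Finset Q := {tr 1, D (tr 1), us v, us v', aff}
  let SC : Finset C := insert (trC α) (insert (trC (1 / 2)) (SQ.image PC))
  have hr : rotationA (α : AddCircle (1 : ℝ)) ∈ ((SC.image Phi : Finset _) : Set _) := by
    rw [← Phi_trC, Finset.mem_coe]
    exact Finset.mem_image_of_mem _ (Finset.mem_insert_self _ _)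
  refine ⟨SC.image Phi, ?_, Subgroup.subset_closure hr, tendsto_of_words _ hr ?_⟩
  · intro x hx
    rw [Finset.mem_coe, Finset.mem_image] at hx
    obtain ⟨f, -, rfl⟩ := hx
    exact isotopic f
  · intro k
    refine ⟨n k, hn k, ?_⟩
    rw [rotation_pow α (n k) (m k)]
    refine HasWord.map (S := (SC : Set C)) Phi
      (fun x hx => Finset.mem_coe.2 (Finset.mem_image_of_mem _ hx)) ?_
    have ha : HasWord (SQ : Set Q) 1 aff := HasWord.of_mem (by simp [SQ])
    have w1 : HasWord (SQ : Set Q) _ (aff * D (D (v k)) * aff⁻¹) :=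
      (ha.mul (word_DD v k (by simp [SQ]) (by simp [SQ]) (by simp [SQ]))).mul ha.inv
    have w2 : HasWord (SQ : Set Q) _ (aff * D (D (v' k)) * aff⁻¹) :=
      (ha.mul (word_DD v' k (by simp [SQ]) (by simp [SQ]) (by simp [SQ]))).mul ha.inv
    have hS : ∀ x ∈ (SQ : Set Q), PC x ∈ (SC : Set C) := fun x hx => Finset.mem_coe.2
      (Finset.mem_insert_of_mem (Finset.mem_insert_of_mem (Finset.mem_image_of_mem _ hx)))
    have hh : HasWord (SC : Set C) 1 (trC (1 / 2)) := HasWord.of_mem (Finset.mem_coe.2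
      (Finset.mem_insert_of_mem (Finset.mem_insert_self _ _)))
    have := ((hh.inv.mul (w1.map PC hS)).mul hh).mul (w2.map PC hS)
    rw [hv]
    convert this using 1
    ring
end

section
/- Let F₁, …, F_l be pairwise commuting homeomorphisms in Homeo_ℤ(ℝ × [0,1]) such that for every index i the rotation set ρ(F_i) is contained in (0, +∞). Then there exists a simple curve γ̃ : [0,1] → ℝ × [0,1] joining the two boundary components of the strip such that, for every index i, the curve F_i(γ̃) lies strictly on the right of the curve γ̃. -/
open Filter Topology Set

def ArcIn (C : Set Strip) (a b : Strip) : Prop :=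
  ∃ (T : ℝ) (γ : ℝ → Strip), 0 ≤ T ∧ ContinuousOn γ (Icc 0 T) ∧ InjOn γ (Icc 0 T) ∧
    γ 0 = a ∧ γ T = b ∧ ∀ t ∈ Icc 0 T, γ t ∈ C

theorem ArcIn.rfl' {C : Set Strip} {a : Strip} (h : a ∈ C) : ArcIn C a a :=
  ⟨0, fun _ => a, le_refl _, continuousOn_const, by simp, rfl, rfl, fun _ _ => h⟩

theorem ArcIn.symm' {C : Set Strip} {a b : Strip} (h : ArcIn C a b) : ArcIn C b a := by
  obtain ⟨T, γ, hT, hc, hi, h0, h1, hC⟩ := h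
  have hm : MapsTo (fun t : ℝ => T - t) (Icc 0 T) (Icc 0 T) := by
    intro t ht; simp only [mem_Icc] at ht ⊢; constructor <;> linarith [ht.1, ht.2]
  refine ⟨T, fun t => γ (T - t), hT, hc.comp (by fun_prop) hm, ?_, by simpa using h1,
    by simpa using h0, fun t ht => hC _ (hm ht)⟩
  intro s hs t ht hst
  have := hi (hm hs) (hm ht) hst
  simp at this; exact this

theorem ArcIn.trans' {C : Set Strip} {a b c : Strip} (h : ArcIn C a b) (h' : ArcIn C b c) :
    ArcIn C a c := by
  obtain ⟨T, α, hT, hc, hi, h0, h1, hC⟩ := h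
  obtain ⟨S, β, hS, kc, ki, k0, k1, kC⟩ := h'
  have hK : IsCompact (β '' Icc 0 S) := isCompact_Icc.image_of_continuousOn kc
  have hZ : IsCompact (Icc 0 T ∩ α ⁻¹' (β '' Icc 0 S)) :=
    isCompact_Icc.of_isClosed_subset (hc.preimage_isClosed_of_isClosed isClosed_Icc hK.isClosed)
      inter_subset_left
  obtain ⟨t0, ⟨ht0, s0, hs0, hs⟩, hmin⟩ := hZ.exists_isLeast
    ⟨T, ⟨hT, le_refl _⟩, 0, ⟨le_refl _, hS⟩, by rw [k0, h1]⟩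
  have hβ : MapsTo (fun t : ℝ => s0 + (t - t0)) (Icc t0 (t0 + (S - s0))) (Icc 0 S) := by
    intro t ht
    simp only [mem_Icc] at ht ⊢
    constructor <;> linarith [ht.1, ht.2, hs0.1]
  have hsub : Icc 0 t0 ⊆ Icc 0 T := Icc_subset_Icc_right ht0.2
  have hle : t0 ≤ t0 + (S - s0) := by linarith [hs0.2]
  refine ⟨t0 + (S - s0), fun t => if t ≤ t0 then α t else β (s0 + (t - t0)),
    by linarith [ht0.1, hs0.2], ?_, ?_, ?_, ?_, ?_⟩
  · rw [← Icc_union_Icc_eq_Icc ht0.1 hle]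
    apply ContinuousOn.union_of_isClosed _ _ isClosed_Icc isClosed_Icc
    · refine (hc.mono hsub).congr ?_
      intro t ht; simp [ht.2]
    · refine (kc.comp (f := fun t : ℝ => s0 + (t - t0)) (by fun_prop) hβ).congr ?_
      intro t ht
      by_cases h : t ≤ t0
      · have : t = t0 := le_antisymm h ht.1
        subst this
        simp [hs]
      · simp [h]
  · have key : ∀ s t, s ∈ Icc 0 (t0 + (S - s0)) → t ∈ Icc 0 (t0 + (S - s0)) → s ≤ t0 →
        ¬ t ≤ t0 → α s ≠ β (s0 + (t - t0)) := by
      intro s t hs1 ht1 h1 h2 he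
      have h3 : s0 + (t - t0) ∈ Icc 0 S := hβ ⟨by linarith, ht1.2⟩
      have h4 : t0 ≤ s := hmin ⟨hsub ⟨hs1.1, h1⟩, _, h3, he.symm⟩
      have h5 : s = t0 := le_antisymm h1 h4
      rw [h5, ← hs] at he
      have := ki hs0 h3 he
      apply h2; linarith
    intro s hs1 t ht1 he
    by_cases h1 : s ≤ t0 <;> by_cases h2 : t ≤ t0 <;> simp only [h1, h2, if_true, if_false] at he
    · exact hi (hsub ⟨hs1.1, h1⟩) (hsub ⟨ht1.1, h2⟩) he
    · exact absurd he (key s t hs1 ht1 h1 h2)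
    · exact absurd he.symm (key t s ht1 hs1 h2 h1)
    · have := ki (hβ ⟨by linarith, hs1.2⟩) (hβ ⟨by linarith, ht1.2⟩) he
      linarith
  · simp [ht0.1, h0]
  · by_cases h : t0 + (S - s0) ≤ t0
    · have : s0 = S := le_antisymm hs0.2 (by linarith)
      subst this
      simp [← hs, k1]
    · simp only [h, if_false]; rw [← k1]; congr 1; ring
  · intro t ht
    by_cases h : t ≤ t0
    · simp only [h, if_true]; exact hC _ (hsub ⟨ht.1, h⟩)
    · simp only [h, if_false]; exact kC _ (hβ ⟨by linarith, ht.2⟩)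

theorem ArcIn.local' {C : Set Strip} (hC : IsOpen C) {a : Strip} (ha : a ∈ C) :
    ∀ᶠ b in 𝓝 a, ArcIn C a b := by
  obtain ⟨r, hr, hb⟩ := Metric.isOpen_iff.1 hC a ha
  filter_upwards [Metric.ball_mem_nhds a hr] with b hbb
  by_cases hab : a = b
  · subst hab; exact ArcIn.rfl' ha
  have hmem : ∀ t ∈ Icc (0:ℝ) 1, (a.2 : ℝ) + t * ((b.2 : ℝ) - a.2) ∈ Icc (0:ℝ) 1 := by
    intro t ht
    have h1 := a.2.2; have h2 := b.2.2
    constructor <;> nlinarith [ht.1, ht.2, h1.1, h1.2, h2.1, h2.2]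
  have hγ : ∀ t ∈ Icc (0:ℝ) 1,
      ((projIcc (0:ℝ) 1 zero_le_one ((a.2 : ℝ) + t * ((b.2 : ℝ) - a.2)) : unitInterval) : ℝ)
        = (a.2 : ℝ) + t * ((b.2 : ℝ) - a.2) := by
    intro t ht
    rw [projIcc_of_mem _ (hmem t ht)]
  refine ⟨1, fun t => (a.1 + t * (b.1 - a.1),
    projIcc (0:ℝ) 1 zero_le_one ((a.2 : ℝ) + t * ((b.2 : ℝ) - a.2))), zero_le_one, ?_, ?_, ?_, ?_, ?_⟩
  · apply Continuous.continuousOn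
    exact Continuous.prodMk (by fun_prop) (continuous_projIcc.comp (by fun_prop))
  · intro s hs t ht he
    simp only [Prod.mk.injEq] at he
    have h1 := he.1
    have h2 := congrArg (Subtype.val) he.2
    rw [hγ s hs, hγ t ht] at h2
    by_contra hne
    have hne' : s - t ≠ 0 := sub_ne_zero.2 hne
    apply hab
    have e1 : (s - t) * (b.1 - a.1) = 0 := by linarith
    have e2 : (s - t) * ((b.2 : ℝ) - a.2) = 0 := by linarith
    have e1' := (mul_eq_zero.1 e1).resolve_left hne'
    have e2' := (mul_eq_zero.1 e2).resolve_left hne'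
    exact Prod.ext (by linarith) (Subtype.ext (by linarith))
  · exact Prod.ext (by simp) (Subtype.ext (by rw [hγ 0 (by simp)]; simp))
  · exact Prod.ext (by simp) (Subtype.ext (by rw [hγ 1 (by simp)]; simp))
  · intro t ht
    apply hb
    rw [Metric.mem_ball, Prod.dist_eq, max_lt_iff] at hbb ⊢
    rw [Subtype.dist_eq, Real.dist_eq, Real.dist_eq] at hbb ⊢
    rw [hγ t ht]
    have ht' : |t| ≤ 1 := by rw [abs_of_nonneg ht.1]; exact ht.2
    constructor
    · have : a.1 + t * (b.1 - a.1) - a.1 = t * (b.1 - a.1) := by ring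
      simp only [this, abs_mul]
      nlinarith [hbb.1, abs_nonneg (b.1 - a.1)]
    · have : (a.2 : ℝ) + t * ((b.2:ℝ) - a.2) - a.2 = t * ((b.2:ℝ) - a.2) := by ring
      simp only [this, abs_mul]
      nlinarith [hbb.2, abs_nonneg ((b.2:ℝ) - a.2)]

theorem ArcIn.joins {C : Set Strip} {a b : Strip} (h : ArcIn C a b) (ha : (a.2 : ℝ) = 0)
    (hb : (b.2 : ℝ) = 1) : ∃ γ : unitInterval → Strip, JoinsBoundaryS γ ∧ ∀ t, γ t ∈ C := by
  obtain ⟨T, α, hT, hc, hi, h0, h1, hC⟩ := h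
  have hc2 : ContinuousOn (fun t => ((α t).2 : ℝ)) (Icc 0 T) :=
    (continuous_subtype_val.comp continuous_snd).comp_continuousOn hc
  have hZ : IsCompact (Icc 0 T ∩ (fun t => ((α t).2 : ℝ)) ⁻¹' {0}) :=
    isCompact_Icc.of_isClosed_subset (hc2.preimage_isClosed_of_isClosed isClosed_Icc
      isClosed_singleton) inter_subset_left
  obtain ⟨t1, ⟨ht1, hz1⟩, hmax⟩ := hZ.exists_isGreatest
    ⟨0, ⟨le_refl _, hT⟩, by simp [h0, ha]⟩
  have hsub1 : Icc t1 T ⊆ Icc 0 T := Icc_subset_Icc_left ht1.1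
  have hZ2 : IsCompact (Icc t1 T ∩ (fun t => ((α t).2 : ℝ)) ⁻¹' {1}) :=
    isCompact_Icc.of_isClosed_subset ((hc2.mono hsub1).preimage_isClosed_of_isClosed isClosed_Icc
      isClosed_singleton) inter_subset_left
  obtain ⟨t2, ⟨ht2, hz2⟩, hmin⟩ := hZ2.exists_isLeast
    ⟨T, ⟨ht1.2, le_refl _⟩, by simp [h1, hb]⟩
  simp only [mem_preimage, mem_singleton_iff] at hz1 hz2
  have hlt : t1 < t2 := by
    refine lt_of_le_of_ne ht2.1 ?_
    intro he; rw [he, hz2] at hz1; norm_num at hz1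
  have hm : ∀ x : unitInterval, t1 + (x : ℝ) * (t2 - t1) ∈ Icc t1 t2 := by
    intro x
    have := x.2
    constructor <;> nlinarith [this.1, this.2]
  have hsub2 : Icc t1 t2 ⊆ Icc 0 T := (Icc_subset_Icc_right ht2.2).trans hsub1
  refine ⟨fun x => α (t1 + (x : ℝ) * (t2 - t1)), ⟨?_, ?_, ?_, ?_, ?_⟩, fun t => hC _ (hsub2 (hm t))⟩
  · exact hc.comp_continuous (by fun_prop) (fun x => hsub2 (hm x))
  · intro x y hxy
    have := hi (hsub2 (hm x)) (hsub2 (hm y)) hxy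
    have h3 : ((x : ℝ) - y) * (t2 - t1) = 0 := by linarith
    rcases mul_eq_zero.1 h3 with h | h
    · exact Subtype.ext (by linarith)
    · linarith
  · simpa using hz1
  · simpa using hz2
  · intro x hx0 hx1
    have hx := x.2
    have p0 : 0 < (x : ℝ) := lt_of_le_of_ne hx.1 (fun h => hx0 (Subtype.ext h.symm))
    have p1 : (x : ℝ) < 1 := lt_of_le_of_ne hx.2 (fun h => hx1 (Subtype.ext h))
    have q := (α (t1 + (x : ℝ) * (t2 - t1))).2.2
    refine ⟨lt_of_le_of_ne q.1 ?_, lt_of_le_of_ne q.2 ?_⟩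
    · intro he
      have := hmax ⟨hsub2 (hm x), he.symm⟩
      nlinarith
    · intro he
      have := hmin ⟨⟨(hm x).1, (hm x).2.trans ht2.2⟩, he⟩
      nlinarith

theorem int_const {f : ℝ → ℝ} (hf : Continuous f) (h : ∀ x, ∃ n : ℤ, f x = n) (a b : ℝ) :
    f a = f b := by
  choose g hg using h
  have hgc : Continuous g := by
    rw [Int.isClosedEmbedding_coe_real.isInducing.continuous_iff]
    convert hf using 1
    ext x; simp [hg]
  rw [hg, hg, PreconnectedSpace.constant inferInstance hgc (x := a) (y := b)]

theorem coe_zero_iff (x : ℝ) (h : (x : AddCircle (1:ℝ)) = 0) : ∃ n : ℤ, x = n := by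
  obtain ⟨n, hn⟩ := (AddCircle.coe_eq_zero_iff (1:ℝ)).1 h
  exact ⟨n, by simpa using hn.symm⟩

theorem crossing {A B : Set Strip} (hA : IsClosed A) (hB : IsClosed B) (hAB : Disjoint A B)
    (M : ℝ) (hAM : ∀ x : Strip, x.1 ≤ -M → x ∈ A) (hBM : ∀ x : Strip, M ≤ x.1 → x ∈ B) :
    ∃ γ : unitInterval → Strip, JoinsBoundaryS γ ∧ ∀ t, γ t ∈ (A ∪ B)ᶜ := by
  by_contra hcon
  set U : Set Strip := (A ∪ B)ᶜ with hU
  have hUo : IsOpen U := (hA.union hB).isOpen_compl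
  have hno : ∀ a b : Strip, (a.2 : ℝ) = 0 → (b.2 : ℝ) = 1 → ¬ ArcIn U a b :=
    fun a b ha hb h => hcon (h.joins ha hb)
  obtain ⟨u, hu0, hu1, -⟩ := exists_continuous_zero_one_of_isClosed hA hB hAB
  set Ub : Set Strip := {x | ∃ a : Strip, (a.2 : ℝ) = 0 ∧ ArcIn U a x} with hUb
  classical
  let g : Strip → AddCircle (1:ℝ) := fun x => if x ∈ Ub then ((u x : ℝ) : AddCircle (1:ℝ)) else 0
  have hu : ∀ x, x ∉ U → ((u x : ℝ) : AddCircle (1:ℝ)) = 0 := by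
    intro x hx
    rw [hU, notMem_compl_iff] at hx
    rcases hx with hx | hx
    · have := hu0 hx
      simp [this]
    · have := hu1 hx
      simp only [Pi.one_apply] at this
      rw [this]; exact AddCircle.coe_period 1
  have hgU : ∀ x, x ∉ U → g x = 0 := by
    intro x hx
    simp only [g, hu x hx, ite_self]
  have huc : Continuous (fun x => ((u x : ℝ) : AddCircle (1:ℝ))) :=
    (AddCircle.continuous_mk' 1).comp u.continuous
  have hgc : Continuous g := by
    rw [continuous_iff_continuousAt]
    intro x
    by_cases hx : x ∈ U
    · by_cases hxb : x ∈ Ub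
      · apply huc.continuousAt.congr
        filter_upwards [ArcIn.local' hUo hx] with y hy
        obtain ⟨a, ha, hax⟩ := hxb
        have : y ∈ Ub := ⟨a, ha, hax.trans' hy⟩
        simp only [g, this, if_true]
      · apply (continuousAt_const (y := (0 : AddCircle (1:ℝ)))).congr
        filter_upwards [ArcIn.local' hUo hx] with y hy
        have : y ∉ Ub := by
          rintro ⟨a, ha, hay⟩
          exact hxb ⟨a, ha, hay.trans' hy.symm'⟩
        simp only [g, this, if_false]
    · rw [ContinuousAt, hgU x hx]
      intro W hW
      have h1 := huc.continuousAt (x := x)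
      rw [ContinuousAt, hu x hx] at h1
      have h2 := h1 hW
      rw [mem_map] at h2 ⊢
      filter_upwards [h2] with y hy
      by_cases hyb : y ∈ Ub
      · simpa only [mem_preimage, g, hyb, if_true] using hy
      · simpa only [mem_preimage, g, hyb, if_false] using mem_of_mem_nhds hW
  have hbot : ∀ x : Strip, (x.2 : ℝ) = 0 → g x = ((u x : ℝ) : AddCircle (1:ℝ)) := by
    intro x hx
    by_cases hxU : x ∈ U
    · have : x ∈ Ub := ⟨x, hx, ArcIn.rfl' hxU⟩
      simp only [g, this, if_true]
    · rw [hgU x hxU, hu x hxU]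
  have htop : ∀ x : Strip, (x.2 : ℝ) = 1 → g x = 0 := by
    intro x hx
    have : x ∉ Ub := by
      rintro ⟨a, ha, h⟩; exact hno a x ha hx h
    simp only [g, this, if_false]
  let pr : ℝ × ℝ → Strip := fun z => (z.1, projIcc (0:ℝ) 1 zero_le_one z.2)
  have hpr : Continuous pr := continuous_fst.prodMk (continuous_projIcc.comp continuous_snd)
  obtain ⟨e0, he0⟩ := QuotientAddGroup.mk_surjective (g (pr (0,0)))
  obtain ⟨H, ⟨-, hH⟩, -⟩ := (AddCircle.isCoveringMap_coe (1:ℝ)).existsUnique_continuousMap_lifts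
    (⟨fun z => g (pr z), hgc.comp hpr⟩ : C(ℝ × ℝ, AddCircle (1:ℝ))) (0,0) e0 he0
  have hH' : ∀ z, ((H z : ℝ) : AddCircle (1:ℝ)) = g (pr z) := fun z => congrFun hH z
  set K : ℝ := |M| with hK
  have hK1 : M ≤ K := le_abs_self M
  have hl : ∀ y : ℝ, pr (-K, y) ∈ A := fun y => hAM _ (by simpa [pr] using hK1)
  have hr : ∀ y : ℝ, pr (K, y) ∈ B := fun y => hBM _ (by simpa [pr] using hK1)
  have e1 : H (-K, 0) = H (-K, 1) := by
    refine int_const (f := fun y => H (-K, y)) (by fun_prop) (fun y => coe_zero_iff _ ?_) 0 1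
    rw [hH', hgU]; simp [hU, hl y]
  have e2 : H (K, 0) = H (K, 1) := by
    refine int_const (f := fun y => H (K, y)) (by fun_prop) (fun y => coe_zero_iff _ ?_) 0 1
    rw [hH', hgU]; simp [hU, hr y]
  have e3 : H (-K, 1) = H (K, 1) := by
    refine int_const (f := fun x => H (x, 1)) (by fun_prop) (fun y => coe_zero_iff _ ?_) (-K) K
    rw [hH', htop]; simp [pr]
  have e4 : H (-K, 0) - u (pr (-K, 0)) = H (K, 0) - u (pr (K, 0)) := by
    refine int_const (f := fun x => H (x, 0) - u (pr (x, 0))) (by fun_prop)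
      (fun y => coe_zero_iff _ ?_) (-K) K
    rw [AddCircle.coe_sub, hH', hbot, sub_self]; simp [pr]
  have e5 := hu0 (hl 0)
  have e6 := hu1 (hr 0)
  simp only [Pi.zero_apply, Pi.one_apply] at e5 e6
  rw [e5, e6] at e4
  linarith

theorem per_int {g : Strip → ℝ} (hp : ∀ x : Strip, g (x.1 + 1, x.2) = g x) (n : ℤ) (x : Strip) :
    g (x.1 + n, x.2) = g x := by
  have h : Function.Periodic (fun t : ℝ => g (t, x.2)) 1 := fun t => hp (t, x.2)
  have := h.int_mul n x.1
  simpa using this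

theorem per_fract {g : Strip → ℝ} (hp : ∀ x : Strip, g (x.1 + 1, x.2) = g x) (x : Strip) :
    ∃ y ∈ Icc (0:ℝ) 1 ×ˢ (univ : Set unitInterval), g x = g y := by
  refine ⟨(Int.fract x.1, x.2), ⟨⟨Int.fract_nonneg _, (Int.fract_lt_one _).le⟩, mem_univ _⟩, ?_⟩
  rw [← per_int hp ⌊x.1⌋ (Int.fract x.1, x.2)]
  simp [Int.fract_add_floor]

theorem per_bdd {g : Strip → ℝ} (hc : Continuous g) (hp : ∀ x : Strip, g (x.1 + 1, x.2) = g x) :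
    ∃ K, ∀ x, |g x| ≤ K := by
  obtain ⟨K, hK⟩ := (isCompact_Icc.prod isCompact_univ :
    IsCompact (Icc (0:ℝ) 1 ×ˢ (univ : Set unitInterval))).exists_bound_of_continuousOn hc.continuousOn
  refine ⟨K, fun x => ?_⟩
  obtain ⟨y, hy, he⟩ := per_fract hp x
  rw [he]; exact hK y hy

theorem per_pos {g : Strip → ℝ} (hc : Continuous g) (hp : ∀ x : Strip, g (x.1 + 1, x.2) = g x)
    (h0 : ∀ x, 0 < g x) : ∃ δ > 0, ∀ x, δ ≤ g x := by
  obtain ⟨z, -, hz⟩ := (isCompact_Icc.prod isCompact_univ :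
    IsCompact (Icc (0:ℝ) 1 ×ˢ (univ : Set unitInterval))).exists_isMinOn
      ⟨(0, 0), by simp⟩ hc.continuousOn
  refine ⟨g z, h0 z, fun x => ?_⟩
  obtain ⟨y, hy, he⟩ := per_fract hp x
  rw [he]; exact hz hy

theorem disp_bdd (F : Strip ≃ₜ Strip)
    (hZ : ∀ x : Strip, F (x.1 + 1, x.2) = ((F x).1 + 1, (F x).2)) :
    ∃ K, ∀ x, |(F x).1 - x.1| ≤ K := by
  apply per_bdd (g := fun x => (F x).1 - x.1) (by fun_prop)
  intro x
  simp only [hZ]; ring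

theorem iter_disp (F : Strip ≃ₜ Strip) {K : ℝ} (hK : ∀ x, |(F x).1 - x.1| ≤ K) (n : ℕ) (x : Strip) :
    |((⇑F)^[n] x).1 - x.1| ≤ n * K := by
  induction n with
  | zero => simp
  | succ n ih =>
    rw [Function.iterate_succ_apply']
    have := hK ((⇑F)^[n] x)
    rw [abs_le] at *
    push_cast
    constructor <;> linarith [this.1, this.2, ih.1, ih.2]

theorem eventually_right (F : Strip ≃ₜ Strip)
    (hZ : ∀ x : Strip, F (x.1 + 1, x.2) = ((F x).1 + 1, (F x).2))
    (hrot : rotSet F ⊆ Ioi (0:ℝ)) : ∀ᶠ n : ℕ in atTop, ∀ x : Strip, x.1 < ((⇑F)^[n] x).1 := by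
  by_contra hcon
  obtain ⟨K, hK⟩ := disp_bdd F hZ
  rw [eventually_atTop] at hcon
  push Not at hcon
  choose n hn x hx using hcon
  have hnt : Tendsto n atTop atTop := tendsto_atTop_mono hn tendsto_id
  have hmem : ∀ k, (((⇑F)^[n k] (x k)).1 - (x k).1) / n k ∈ Icc (-K) 0 := by
    intro k
    have h1 := iter_disp F hK (n k) (x k)
    rcases Nat.eq_zero_or_pos (n k) with h | h
    · have : 0 ≤ K := (abs_nonneg _).trans (hK (x k))
      rw [h]; simpa using this
    · have hp : (0:ℝ) < n k := by exact_mod_cast h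
      rw [abs_le] at h1
      constructor
      · rw [le_div_iff₀ hp]; linarith [h1.1]
      · apply div_nonpos_of_nonpos_of_nonneg _ hp.le; linarith [hx k]
  obtain ⟨r, hr, s, hs, hlim⟩ := isCompact_Icc.tendsto_subseq hmem
  have : r ∈ rotSet F := ⟨n ∘ s, x ∘ s, hnt.comp hs.tendsto_atTop, hlim⟩
  exact absurd (hrot this) (not_lt.2 hr.2)

theorem iter_comm {F G : Strip → Strip} (h : ∀ x, F (G x) = G (F x)) (m n : ℕ) (x : Strip) :
    F^[m] (G^[n] x) = G^[n] (F^[m] x) :=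
  (((show Function.Commute F G from h).iterate_left m).iterate_right n) x

theorem exists_phi (l : ℕ) (F : Fin l → Strip ≃ₜ Strip)
    (hZ : ∀ i, ∀ x : Strip, F i (x.1 + 1, x.2) = ((F i x).1 + 1, (F i x).2))
    (hcomm : ∀ i j, ∀ x : Strip, F i (F j x) = F j (F i x))
    (N : ℕ) (hN0 : 0 < N) (hN : ∀ i, ∀ x : Strip, x.1 < ((⇑(F i))^[N] x).1) (s : Finset (Fin l)) :
    ∃ (φ : Strip → ℝ) (c : ℝ), Continuous φ ∧ 0 < c ∧ (∀ x : Strip, φ (x.1 + 1, x.2) = φ x + c) ∧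
      (∀ j ∈ s, ∀ x, φ x < φ (F j x)) ∧ ∀ j, ∀ x, φ x < φ ((⇑(F j))^[N] x) := by
  induction s using Finset.induction_on with
  | empty => exact ⟨fun x => x.1, 1, continuous_fst, one_pos, fun _ => rfl, by simp, hN⟩
  | insert k s hk ih =>
    obtain ⟨φ, c, hc, hc0, hT, h1, h2⟩ := ih
    have hne : (Finset.range N).Nonempty := Finset.nonempty_range_iff.2 hN0.ne'
    refine ⟨fun x => ∑ m ∈ Finset.range N, φ ((⇑(F k))^[m] x), N * c, ?_, ?_, ?_, ?_, ?_⟩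
    · exact continuous_finsetSum _ (fun m _ => hc.comp ((F k).continuous.iterate m))
    · positivity
    · intro x
      have hit : ∀ m : ℕ, (⇑(F k))^[m] (x.1 + 1, x.2) =
          (((⇑(F k))^[m] x).1 + 1, ((⇑(F k))^[m] x).2) := by
        intro m
        induction m with
        | zero => rfl
        | succ m ihm => rw [Function.iterate_succ_apply', ihm, hZ, Function.iterate_succ_apply']
      simp only [hit, hT, Finset.sum_add_distrib]
      simp
    · intro j hj x
      rcases Finset.mem_insert.1 hj with rfl | hj
      · have e1 := Finset.sum_range_succ (fun m => φ ((⇑(F j))^[m] x)) N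
        have e2 := Finset.sum_range_succ' (fun m => φ ((⇑(F j))^[m] x)) N
        simp only [Function.iterate_succ_apply, Function.iterate_zero, id] at e2
        have := h2 j x
        linarith
      · apply Finset.sum_lt_sum_of_nonempty hne
        intro m _
        have := iter_comm (hcomm k j) m 1 x
        simp only [Function.iterate_one] at this
        rw [this]
        exact h1 j hj _
    · intro j x
      apply Finset.sum_lt_sum_of_nonempty hne
      intro m _
      rw [iter_comm (hcomm k j) m N x]
      exact h2 j _

/-- **Lemma (Béguin–Crovisier–Le Roux–Patou).** Let `F₁, …, F_l` be pairwise commuting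
homeomorphisms of the strip commuting with the translation `(x, y) ↦ (x + 1, y)`, whose
rotation sets are all contained in `(0, +∞)`. Then there is a simple curve joining the
two boundary components of the strip such that, for every `i`, the curve `F_i(γ̃)` lies
strictly on the right of `γ̃`. -/
theorem commuting_homeos_free_curve
    (l : ℕ) (F : Fin l → Strip ≃ₜ Strip)
    (hZ : ∀ i, ∀ x : Strip, F i (x.1 + 1, x.2) = ((F i x).1 + 1, (F i x).2))
    (hcomm : ∀ i j, ∀ x : Strip, F i (F j x) = F j (F i x))
    (hrot : ∀ i, rotSet (F i) ⊆ Set.Ioi (0 : ℝ)) :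
    ∃ γt : unitInterval → Strip, JoinsBoundaryS γt ∧
      ∀ i, StrictlyRightS γt (Set.range (⇑(F i) ∘ γt)) := by
  have hev : ∀ᶠ n : ℕ in atTop, ∀ i, ∀ x : Strip, x.1 < ((⇑(F i))^[n] x).1 :=
    eventually_all.2 fun i => eventually_right (F i) (hZ i) (hrot i)
  obtain ⟨N, hN, hN0⟩ := (hev.and (eventually_gt_atTop 0)).exists
  obtain ⟨φ, c, hc, hc0, hT, hφ, -⟩ := exists_phi l F hZ hcomm N hN0 hN Finset.univ
  have hε : ∀ᶠ ε : ℝ in 𝓝[>] 0, ∀ i, ∀ x, φ x + ε ≤ φ (F i x) := by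
    refine eventually_all.2 fun i => ?_
    obtain ⟨δ, hδ, h⟩ := per_pos (g := fun x => φ (F i x) - φ x)
      ((hc.comp (F i).continuous).sub hc) (fun x => by simp only [hZ, hT]; ring)
      (fun x => sub_pos.2 (hφ i (Finset.mem_univ _) x))
    filter_upwards [Ioo_mem_nhdsGT hδ] with ε hε x
    linarith [h x, hε.2]
  obtain ⟨ε, hεF, hε0⟩ := (hε.and self_mem_nhdsWithin).exists
  have hε0 : 0 < ε := hε0
  obtain ⟨K, hK⟩ := per_bdd (g := fun x => φ x - c * x.1) (by fun_prop)
    (fun x => by simp only [hT]; ring)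
  set M : ℝ := (K + ε + 1) / c with hM
  have hcM : c * M = K + ε + 1 := by rw [hM]; field_simp
  have hright : ∀ x : Strip, M ≤ x.1 → ε < φ x := by
    intro x hx
    have h1 := (abs_le.1 (hK x)).1
    have h2 := mul_le_mul_of_nonneg_left hx hc0.le
    linarith
  have hleft : ∀ x : Strip, x.1 ≤ -M → φ x < 0 := by
    intro x hx
    have h1 := (abs_le.1 (hK x)).2
    have h2 := mul_le_mul_of_nonneg_left hx hc0.le
    linarith
  set O : Set Strip := {x | 0 < φ x} with hO
  have hOo : IsOpen O := isOpen_lt continuous_const hc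
  set V : Set Strip := connectedComponentIn O (M, 0) with hV
  have hVO : V ⊆ O := connectedComponentIn_subset _ _
  have hVc : IsPreconnected V := isPreconnected_connectedComponentIn
  have hmO : ((M, 0) : Strip) ∈ O := hε0.trans (hright _ (le_refl _))
  have hmV : ((M, 0) : Strip) ∈ V := mem_connectedComponentIn hmO
  have hMV : ∀ x : Strip, M ≤ x.1 → x ∈ V := by
    have : IsPreconnected (Ici M ×ˢ (univ : Set unitInterval)) :=
      isPreconnected_Ici.prod isPreconnected_univ
    intro x hx
    refine this.subset_connectedComponentIn (x := ((M, 0) : Strip)) (by simp) ?_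
      (show x ∈ Ici M ×ˢ univ from ⟨hx, mem_univ _⟩)
    intro y hy
    exact hε0.trans (hright y hy.1)
  have hext : ∀ P : Set Strip, IsPreconnected P → P ⊆ O → (P ∩ V).Nonempty → P ⊆ V := by
    rintro P hP hPO ⟨z, hzP, hzV⟩
    have h1 : IsPreconnected (P ∪ V) := hP.union z hzP hzV hVc
    exact subset_union_left.trans
      (h1.subset_connectedComponentIn (Or.inr hmV) (union_subset hPO hVO))
  have hVo : IsOpen V := by
    rw [isOpen_iff_mem_nhds]
    intro x hx
    filter_upwards [ArcIn.local' hOo (hVO hx)] with y hy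
    obtain ⟨T, γ, hT0, hγ, -, h0, h1, hC⟩ := hy
    refine hext (γ '' Icc 0 T) (isPreconnected_Icc.image γ hγ) ?_ ?_ ⟨T, ⟨hT0, le_refl _⟩, h1⟩
    · rintro _ ⟨t, ht, rfl⟩; exact hC t ht
    · exact ⟨x, ⟨0, ⟨le_refl _, hT0⟩, h0⟩, hx⟩
  have hVcl : closure V ∩ O ⊆ V := by
    intro x hx
    have h1 : IsPreconnected (insert x V) :=
      hVc.subset_closure (subset_insert _ _) (insert_subset hx.1 subset_closure)
    exact hext _ h1 (insert_subset hx.2 hVO) ⟨_, Or.inr hmV, hmV⟩ (mem_insert _ _)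
  have hB : IsClosed (V ∩ {x | ε ≤ φ x}) := by
    have : V ∩ {x | ε ≤ φ x} = closure V ∩ {x | ε ≤ φ x} := by
      apply Subset.antisymm (inter_subset_inter_left _ subset_closure)
      rintro x ⟨h1, h2⟩
      exact ⟨hVcl ⟨h1, hε0.trans_le h2⟩, h2⟩
    rw [this]
    exact isClosed_closure.inter (isClosed_le continuous_const hc)
  obtain ⟨γ, hγ, hγU⟩ := crossing (A := Vᶜ) hVo.isClosed_compl hB
    (disjoint_left.2 fun x h1 h2 => h1 h2.1) M
    (fun x hx hxV => absurd (hVO hxV) (not_lt.2 (hleft x hx).le))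
    (fun x hx => ⟨hMV x hx, (hright x hx).le⟩)
  have hγV : ∀ t, γ t ∈ V := fun t => by
    by_contra h; exact hγU t (Or.inl h)
  have hγε : ∀ t, φ (γ t) < ε := fun t => by
    by_contra h; exact hγU t (Or.inr ⟨hγV t, not_lt.1 h⟩)
  refine ⟨γ, hγ, ?_⟩
  rintro i _ ⟨t, rfl⟩
  obtain ⟨D, hD⟩ := disp_bdd (F i) (hZ i)
  set q1 : Strip := (M + |D|, 0) with hq1
  have hq1V : q1 ∈ V := hMV _ (by simp [hq1])
  refine ⟨F i q1, ?_, ?_⟩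
  · intro s
    have h1 : (γ s).1 < M := by
      by_contra h
      exact absurd (hright _ (not_lt.1 h)) (not_lt.2 (hγε s).le)
    have h2 := (abs_le.1 (hD q1)).1
    have h3 : q1.1 = M + |D| := rfl
    linarith [le_abs_self D]
  · have h1 : IsPreconnected (F i '' V) := hVc.image _ (F i).continuous.continuousOn
    refine h1.subset_connectedComponentIn (mem_image_of_mem _ hq1V) ?_ (mem_image_of_mem _ (hγV t))
    rintro _ ⟨v, hv, rfl⟩ ⟨s, hs⟩
    have h2 := hεF i v
    have h3 : 0 < φ v := hVO hv
    have h4 := hγε s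
    rw [hs] at h4
    linarith
end
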